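/- arXiv:2302.05946 — 5 statements merged into one kernel-verified Lean document; each statement's English description precedes it below -/
import Mathlib

section
/- For every number field K there exists a constant C_K, depending only on K, such that every covering system of O_K whose moduli are pairwise distinct distinguishable ideals contains a modulus of norm at most C_K. -/
/-!
The proof is the distortion method for covering systems (Balister, Bollobás, Morris, Sahasrabudhe
and Tiba), carried out over `𝓞 K`.

Suppose all moduli have norm larger than a suitable constant. The primes dividing the moduli are
treated one at a time, in order of increasing norm, and a probability measure on residue classes
is built up along the way: when `P` of norm `q` is treated, every residue class `x` known so far
is refined into its fibre `𝓞 K ⧸ P ^ γ`, and on this fibre the uniform measure is distorted so as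
to avoid the set `B` of points covered by a modulus divisible by `P`. With the distortion of
`exists_kernel`, no point gets more than twice its uniform weight, while `B`, of density `α`, gets
weight at most `α ^ 2`. The structure `Distortion` records the invariants of this process, and
`distortion_insert` is the inductive step.

* Since weights at most double, the second moment of the number of classes containing a random
  point grows by a factor of at most `1 + 20 / q`. As `α` is at most a sum of `q ^ (-j)` times such
  numbers of classes over `1 ≤ j`, the weight newly covered at `P` is at most
  `(2 / q) ^ 2 * ∏ (1 + 20 / N Q)` over the primes `Q` treated before. The product is `O(√q)` by
  `prod_primes_le`, which uses `π(n) = o(n)` and the fact that at most `[K : ℚ]` primes lie over a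
  rational prime. Hence this weight is `O(q ^ (-3 / 2))`, and by `sum_primes_tail` the total over
  all primes of norm more than some `Y` is at most `1 / 4`.
* The sum over all `Y`-smooth moduli `m` of `√(N m)` times the weight of a class modulo `m` is at
  most `8 ^ B`, where `B` is the number of ideals of norm at most `Y`. So smooth moduli of norm
  more than `(4 * 8 ^ B) ^ 2` cover a weight of at most `1 / 4`.

The covered weight is therefore at most `1 / 2`, and some residue class is not covered.
-/

set_option maxHeartbeats 1000000
set_option synthInstance.maxHeartbeats 1000000

open scoped Classical
open NumberField

/-- `p` is the unique prime ideal factor of `I` of largest norm. -/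
def IsPmin {K : Type*} [Field K] [NumberField K] (I p : Ideal (𝓞 K)) : Prop :=
  p.IsPrime ∧ p ∣ I ∧ ∀ q : Ideal (𝓞 K), q.IsPrime → q ∣ I → q ≠ p →
    Ideal.absNorm q < Ideal.absNorm p

/-- A nonzero proper ideal is distinguishable if it has a unique prime factor of largest norm. -/
def Distinguishable {K : Type*} [Field K] [NumberField K] (I : Ideal (𝓞 K)) : Prop :=
  I ≠ ⊥ ∧ I ≠ ⊤ ∧ ∃ p : Ideal (𝓞 K), IsPmin I p

/-! ### Prime numbers and prime ideals -/

/-- `π(n) = o(n)`, from Chebyshev's bound. -/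
lemma primeCounting_le_linear (ε : ℝ) (hε : 0 < ε) :
    ∃ C : ℝ, 0 ≤ C ∧ ∀ n : ℕ, (Nat.primeCounting n : ℝ) ≤ ε * n + C := by
  have h1 := Chebyshev.eventually_primeCounting_le (ε := 1) one_pos
  have h2 : ∀ᶠ x : ℝ in Filter.atTop, (Real.log 4 + 1) / ε ≤ Real.log x :=
    Real.tendsto_log_atTop.eventually_ge_atTop _
  obtain ⟨x0, hx0⟩ := Filter.eventually_atTop.1 (h1.and (h2.and (Filter.eventually_ge_atTop 2)))
  have h4 : 0 ≤ Real.log 4 := Real.log_nonneg (by norm_num)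
  refine ⟨(⌈x0⌉₊ : ℝ), by positivity, fun n => ?_⟩
  rcases le_total x0 n with h | h
  · obtain ⟨ha, hb, hc⟩ := hx0 n h
    rw [Nat.floor_natCast] at ha
    have hl : 0 < Real.log (n : ℝ) := Real.log_pos (by linarith)
    have : (Real.log 4 + 1) * n / Real.log n ≤ ε * n := by
      rw [div_le_iff₀ hl]
      rw [div_le_iff₀ hε] at hb
      have : (0 : ℝ) ≤ n := by positivity
      nlinarith
    have : (0 : ℝ) ≤ (⌈x0⌉₊ : ℝ) := by positivity
    linarith
  · have h3 : (Nat.primeCounting n : ℝ) ≤ n := by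
      have : Nat.primeCounting n ≤ n := by
        rw [← Nat.primesLE_card_eq_primeCounting]
        calc _ ≤ (Finset.Icc 1 n).card := Finset.card_le_card (fun p hp => by
              rw [Nat.mem_primesLE] at hp
              exact Finset.mem_Icc.2 ⟨hp.2.one_le, hp.1⟩)
          _ = n := by simp
      exact_mod_cast this
    have h5 := Nat.le_ceil x0
    have : 0 ≤ ε * n := by positivity
    linarith

/-- A weak form of Mertens' second theorem, by partial summation from `π(n) = o(n)`. -/
lemma sum_inv_primes_le (ε : ℝ) (hε : 0 < ε) :
    ∃ C : ℝ, 0 ≤ C ∧ ∀ n : ℕ,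
      ∑ p ∈ Nat.primesLE n, (1 : ℝ) / p ≤ ε * Real.log (n + 1) + C := by
  obtain ⟨C, hC, hpi⟩ := primeCounting_le_linear ε hε
  -- The left side equals `∑ k ≤ n, π(k) / (k * (k + 1))`; each summand is bounded by `hpi`.
  have key : ∀ n : ℕ, ∑ p ∈ Nat.primesLE n, (1 : ℝ) / p - Nat.primeCounting n / (n + 1)
      ≤ ε * Real.log (n + 1) + C * (1 - 1 / (n + 1)) := by
    intro n
    induction n with
    | zero => simp
    | succ n ih =>
      have hlog : (1 : ℝ) / (n + 2) ≤ Real.log (n + 2) - Real.log (n + 1) := by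
        have h := Real.one_sub_inv_le_log_of_pos (x := ((n : ℝ) + 2) / (n + 1)) (by positivity)
        rw [Real.log_div (by positivity) (by positivity)] at h
        refine le_trans (le_of_eq ?_) h
        field_simp
        ring
      have hp := hpi (n + 1)
      have hstep : ∑ p ∈ Nat.primesLE (n + 1), (1 : ℝ) / p
            - Nat.primeCounting (n + 1) / ((n + 1 : ℕ) + 1)
          = ∑ p ∈ Nat.primesLE n, (1 : ℝ) / p - Nat.primeCounting n / (n + 1)
            + Nat.primeCounting (n + 1) / ((n + 1) * (n + 2)) := by
        by_cases hpr : (n + 1).Prime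
        · have e1 : Nat.primesLE (n + 1) = insert (n + 1) (Nat.primesLE n) := by
            ext q
            simp only [Finset.mem_insert, Nat.mem_primesLE]
            constructor
            · rintro ⟨h, h'⟩
              rcases Nat.lt_or_ge n q with h'' | h''
              · left; omega
              · exact Or.inr ⟨h'', h'⟩
            · rintro (rfl | ⟨h, h'⟩)
              · exact ⟨le_rfl, hpr⟩
              · exact ⟨by omega, h'⟩
          have e0 : n + 1 ∉ Nat.primesLE n := by
            rw [Nat.mem_primesLE]; omega
          have e2 : Nat.primeCounting (n + 1) = Nat.primeCounting n + 1 := by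
            rw [← Nat.primesLE_card_eq_primeCounting, e1, Finset.card_insert_of_notMem e0,
              Nat.primesLE_card_eq_primeCounting]
          rw [e2, e1, Finset.sum_insert e0]
          push_cast
          field_simp
          ring
        · have e1 : Nat.primesLE (n + 1) = Nat.primesLE n := by
            ext q
            simp only [Nat.mem_primesLE]
            constructor
            · rintro ⟨h, h'⟩
              refine ⟨?_, h'⟩
              rcases Nat.lt_or_ge n q with h'' | h''
              · exact absurd (by rwa [show n + 1 = q by omega]) hpr
              · exact h''
            · rintro ⟨h, h'⟩
              exact ⟨by omega, h'⟩
          have e2 : Nat.primeCounting (n + 1) = Nat.primeCounting n := by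
            rw [← Nat.primesLE_card_eq_primeCounting, e1, Nat.primesLE_card_eq_primeCounting]
          rw [e2, e1]
          push_cast
          field_simp
          ring
      rw [hstep]
      have h6 : (Nat.primeCounting (n + 1) : ℝ) / ((n + 1) * (n + 2))
          ≤ ε * (1 / (n + 2)) + C * (1 / (n + 1) - 1 / (n + 2)) := by
        rw [div_le_iff₀ (by positivity)]
        refine hp.trans (le_of_eq ?_)
        push_cast
        field_simp
        ring
      have h7 := mul_le_mul_of_nonneg_left hlog hε.le
      push_cast
      rw [show (n : ℝ) + 1 + 1 = n + 2 by ring]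
      linarith
  refine ⟨2 * C + ε, by positivity, fun n => ?_⟩
  have h1 := key n
  have h2 : (Nat.primeCounting n : ℝ) / (n + 1) ≤ ε + C := by
    rw [div_le_iff₀ (by positivity)]
    have := hpi n
    have : (0 : ℝ) ≤ C * n := by positivity
    linarith
  have h3 : C * (1 - 1 / ((n : ℝ) + 1)) ≤ C := by
    have : (0 : ℝ) ≤ 1 / ((n : ℝ) + 1) := by positivity
    nlinarith
  linarith

section PrimeIdeals

variable {K : Type*} [Field K] [NumberField K]

lemma two_le_absNorm {P : Ideal (𝓞 K)} (hP : Prime P) : 2 ≤ Ideal.absNorm P := by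
  have h0 : Ideal.absNorm P ≠ 0 := fun h => hP.ne_zero (Ideal.absNorm_eq_zero_iff.1 h)
  have h1 : Ideal.absNorm P ≠ 1 := fun h => hP.not_isUnit (by
    rw [Ideal.isUnit_iff]; exact Ideal.absNorm_eq_one_iff.1 h)
  omega

/-- The rational prime below a prime ideal `P`, encoded as the norm of `P ∩ ℤ`. -/
noncomputable def ratPrime (P : Ideal (𝓞 K)) : ℕ := Ideal.absNorm (Ideal.under ℤ P)

lemma ratPrime_spec {P : Ideal (𝓞 K)} (hP : Prime P) :
    (ratPrime P).Prime ∧ ratPrime P ≤ Ideal.absNorm P ∧ ((ratPrime P : ℕ) : 𝓞 K) ∈ P := by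
  have : P.IsPrime := Ideal.isPrime_of_prime hP
  have : NeZero P := ⟨hP.ne_zero⟩
  refine ⟨Nat.absNorm_under_prime P, ?_, ?_⟩
  · exact Nat.le_of_dvd (by have := two_le_absNorm hP; omega) (Int.absNorm_under_dvd_absNorm P)
  · exact Int.absNorm_under_mem P

/-- At most `[K : ℚ]` prime ideals lie over a rational prime. -/
lemma card_primes_over_le (T : Finset (Ideal (𝓞 K))) (hT : ∀ P ∈ T, Prime P) (p : ℕ) :
    (T.filter (fun P => ratPrime P = p)).card ≤ Module.finrank ℚ K := by
  set U := T.filter (fun P => ratPrime P = p) with hU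
  rcases U.eq_empty_or_nonempty with h | ⟨P0, hP0⟩
  · simp [h]
  have hp : p.Prime := by
    have := Finset.mem_filter.1 hP0
    rw [← this.2]
    exact (ratPrime_spec (hT _ this.1)).1
  have hdvd : ∏ P ∈ U, P ∣ Ideal.span {(p : 𝓞 K)} := by
    refine Finset.prod_primes_dvd _ (fun P hP => hT P (Finset.mem_filter.1 hP).1) ?_
    intro P hP
    have := Finset.mem_filter.1 hP
    rw [Ideal.dvd_iff_le, Ideal.span_singleton_le_iff_mem]
    have h := (ratPrime_spec (hT _ this.1)).2.2
    rwa [this.2] at h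
  have hn : Ideal.absNorm (Ideal.span {(p : 𝓞 K)}) = p ^ Module.finrank ℚ K := by
    rw [Ideal.absNorm_span_singleton, ← Int.cast_natCast, ← eq_intCast (algebraMap ℤ (𝓞 K)),
      Algebra.norm_algebraMap, RingOfIntegers.rank, Int.natAbs_pow, Int.natAbs_natCast]
  have h1 : p ^ U.card ≤ ∏ P ∈ U, Ideal.absNorm P := by
    refine Finset.pow_card_le_prod _ _ _ (fun P hP => ?_)
    have := Finset.mem_filter.1 hP
    rw [← this.2]
    exact (ratPrime_spec (hT _ this.1)).2.1
  have h2 : ∏ P ∈ U, Ideal.absNorm P ∣ p ^ Module.finrank ℚ K := by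
    rw [← hn, ← map_prod]
    exact map_dvd Ideal.absNorm hdvd
  have h3 := h1.trans (Nat.le_of_dvd (pow_pos hp.pos _) h2)
  exact (Nat.pow_le_pow_iff_right hp.one_lt).1 h3

/-- Sums of a decreasing function over norms of prime ideals reduce to sums over rational primes,
as `P` has norm at least `ratPrime P` and at most `[K : ℚ]` primes lie over each `p`. -/
lemma sum_primes_le (T : Finset (Ideal (𝓞 K))) (hT : ∀ P ∈ T, Prime P) (f : ℕ → ℝ)
    (hf0 : ∀ n, 0 ≤ f n) (hf : ∀ m n, 0 < m → m ≤ n → f n ≤ f m) :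
    ∑ P ∈ T, f (Ideal.absNorm P) ≤ Module.finrank ℚ K * ∑ p ∈ T.image ratPrime, f p := by
  calc ∑ P ∈ T, f (Ideal.absNorm P) ≤ ∑ P ∈ T, f (ratPrime P) :=
        Finset.sum_le_sum fun P hP => hf _ _ (ratPrime_spec (hT P hP)).1.pos
          (ratPrime_spec (hT P hP)).2.1
    _ = ∑ p ∈ T.image ratPrime, ∑ P ∈ T with ratPrime P = p, f (ratPrime P) :=
        (Finset.sum_fiberwise_of_maps_to (fun P hP => Finset.mem_image_of_mem _ hP) _).symm
    _ ≤ ∑ p ∈ T.image ratPrime, Module.finrank ℚ K * f p := by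
        refine Finset.sum_le_sum fun p _ => ?_
        rw [Finset.sum_congr rfl (fun P hP => by rw [(Finset.mem_filter.1 hP).2]),
          Finset.sum_const, nsmul_eq_mul]
        gcongr
        · exact hf0 p
        · exact card_primes_over_le T hT p
    _ = _ := (Finset.mul_sum _ _ _).symm

/-- The Euler-type product over primes of norm at most `q` is `O(√q)`. -/
lemma prod_primes_le : ∃ C : ℝ, 0 < C ∧ ∀ (T : Finset (Ideal (𝓞 K))) (q : ℕ), 1 ≤ q →
    (∀ P ∈ T, Prime P) → (∀ P ∈ T, Ideal.absNorm P ≤ q) →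
    ∏ P ∈ T, (1 + 20 / (Ideal.absNorm P : ℝ)) ≤ C * (q : ℝ) ^ (1 / 2 : ℝ) := by
  set n := Module.finrank ℚ K with hn
  have hn0 : 0 < n := Module.finrank_pos
  obtain ⟨C, hC, hsum⟩ := sum_inv_primes_le (1 / (40 * n)) (by positivity)
  refine ⟨Real.exp (Real.log 2 / 2 + 20 * n * C), Real.exp_pos _, ?_⟩
  intro T q hq hT hTq
  have h1 := sum_primes_le T hT (fun k => 1 / (k : ℝ)) (fun k => by positivity)
    (fun m k hm hmk => by
      have : (0 : ℝ) < m := by exact_mod_cast hm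
      have : (m : ℝ) ≤ k := by exact_mod_cast hmk
      exact one_div_le_one_div_of_le ‹_› ‹_›)
  have h2 : ∑ p ∈ T.image ratPrime, (1 : ℝ) / p ≤ ∑ p ∈ Nat.primesLE q, (1 : ℝ) / p := by
    refine Finset.sum_le_sum_of_subset_of_nonneg ?_ (fun _ _ _ => by positivity)
    intro p hp
    obtain ⟨P, hP, rfl⟩ := Finset.mem_image.1 hp
    rw [Nat.mem_primesLE]
    have := ratPrime_spec (hT P hP)
    exact ⟨this.2.1.trans (hTq P hP), this.1⟩
  have h3 := hsum q
  have hq' : (1 : ℝ) ≤ q := by exact_mod_cast hq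
  have h4 : Real.log (q + 1) ≤ Real.log 2 + Real.log q := by
    rw [← Real.log_mul (by norm_num) (by positivity)]
    exact Real.log_le_log (by positivity) (by linarith)
  have h5 : ∏ P ∈ T, (1 + 20 / (Ideal.absNorm P : ℝ))
      ≤ Real.exp (∑ P ∈ T, 20 * (1 / (Ideal.absNorm P : ℝ))) := by
    rw [Real.exp_sum]
    refine Finset.prod_le_prod (fun _ _ => by positivity) (fun P _ => ?_)
    have := Real.add_one_le_exp (20 * (1 / (Ideal.absNorm P : ℝ)))
    refine le_trans (le_of_eq ?_) this
    ring
  refine h5.trans ?_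
  rw [Real.rpow_def_of_pos (by linarith), ← Real.exp_add, Real.exp_le_exp, ← Finset.mul_sum]
  have hn1 : (0 : ℝ) < n := by exact_mod_cast hn0
  calc 20 * ∑ P ∈ T, 1 / (Ideal.absNorm P : ℝ)
      ≤ 20 * (n * (1 / (40 * n) * (Real.log 2 + Real.log q) + C)) := by
        refine mul_le_mul_of_nonneg_left (h1.trans ?_) (by norm_num)
        refine mul_le_mul_of_nonneg_left (h2.trans (h3.trans ?_)) hn1.le
        have : 1 / (40 * (n : ℝ)) * Real.log (q + 1)
            ≤ 1 / (40 * n) * (Real.log 2 + Real.log q) :=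
          mul_le_mul_of_nonneg_left h4 (by positivity)
        linarith
    _ = _ := by field_simp; ring

/-- The series `∑ (N P) ^ (-3 / 2)` over the prime ideals has arbitrarily small tails. -/
lemma sum_primes_tail (c : ℝ) (hc : 0 < c) : ∃ Y : ℕ, ∀ T : Finset (Ideal (𝓞 K)),
    (∀ P ∈ T, Prime P) → (∀ P ∈ T, Y < Ideal.absNorm P) →
    ∑ P ∈ T, ((Ideal.absNorm P : ℝ) ^ (3 / 2 : ℝ))⁻¹ ≤ c := by
  set n := Module.finrank ℚ K with hn
  have hn0 : 0 < n := Module.finrank_pos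
  have hn1 : (0 : ℝ) < n := by exact_mod_cast hn0
  have hs : Summable (fun k : ℕ => ((k : ℝ) ^ (3 / 2 : ℝ))⁻¹) :=
    Real.summable_nat_rpow_inv.2 (by norm_num)
  have hs' : Summable (fun P : {P : Ideal (𝓞 K) // Prime P} =>
      ((Ideal.absNorm P.1 : ℝ) ^ (3 / 2 : ℝ))⁻¹) := by
    refine summable_of_sum_le (c := n * ∑' k : ℕ, ((k : ℝ) ^ (3 / 2 : ℝ))⁻¹)
      (fun _ => by positivity) (fun u => ?_)
    have h := sum_primes_le (u.map (Function.Embedding.subtype _))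
      (fun P hP => by
        obtain ⟨Q, _, rfl⟩ := Finset.mem_map.1 hP
        exact Q.2)
      (fun k => ((k : ℝ) ^ (3 / 2 : ℝ))⁻¹) (fun k => by positivity)
      (fun m k hm hmk => by
        have : (0 : ℝ) < m := by exact_mod_cast hm
        gcongr)
    rw [Finset.sum_map] at h
    refine h.trans (mul_le_mul_of_nonneg_left ?_ hn1.le)
    exact hs.sum_le_tsum _ (fun _ _ => by positivity)
  obtain ⟨s, hs2⟩ := summable_iff_vanishing_norm.1 hs' c hc
  refine ⟨s.sup (fun P => Ideal.absNorm P.1), fun T hT hTY => ?_⟩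
  have h := hs2 (T.subtype Prime) (by
    rw [Finset.disjoint_left]
    intro P hP hPs
    have h1 := hTY P.1 (Finset.mem_subtype.1 hP)
    have h2 := Finset.le_sup (f := fun P : {P : Ideal (𝓞 K) // Prime P} => Ideal.absNorm P.1) hPs
    omega)
  rw [← Finset.sum_subtype_of_mem (fun P => ((Ideal.absNorm P : ℝ) ^ (3 / 2 : ℝ))⁻¹) hT]
  exact (Real.le_norm_self _).trans h.le

end PrimeIdeals

/-! ### Indicators, the distorted fibre measure and moment sums -/

/-- The real-valued indicator of a proposition. -/
noncomputable def ind (p : Prop) : ℝ := if p then 1 else 0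

lemma ind_nonneg (p : Prop) : 0 ≤ ind p := by unfold ind; split_ifs <;> norm_num

lemma ind_le_one (p : Prop) : ind p ≤ 1 := by unfold ind; split_ifs <;> norm_num

lemma ind_true {p : Prop} (h : p) : ind p = 1 := if_pos h

lemma ind_false {p : Prop} (h : ¬p) : ind p = 0 := if_neg h

lemma ind_mono {p q : Prop} (h : p → q) : ind p ≤ ind q := by
  by_cases hp : p
  · rw [ind_true hp, ind_true (h hp)]
  · rw [ind_false hp]; exact ind_nonneg q

lemma ind_le_mul {p q r : Prop} (h : p → q ∧ r) : ind p ≤ ind q * ind r := by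
  by_cases hp : p
  · rw [ind_true hp, ind_true (h hp).1, ind_true (h hp).2, one_mul]
  · rw [ind_false hp]; exact mul_nonneg (ind_nonneg q) (ind_nonneg r)

lemma ind_le_add {p q r : Prop} (h : p → q ∨ r) : ind p ≤ ind q + ind r := by
  by_cases hp : p
  · rcases h hp with h | h
    · rw [ind_true hp, ind_true h]; linarith [ind_nonneg r]
    · rw [ind_true hp, ind_true h]; linarith [ind_nonneg q]
  · rw [ind_false hp]; linarith [ind_nonneg q, ind_nonneg r]

lemma ind_le_sum {ι : Type*} (s : Finset ι) (p : Prop) (f : ι → ℝ) (hf : ∀ i ∈ s, 0 ≤ f i)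
    (h : p → ∃ i ∈ s, 1 ≤ f i) : ind p ≤ ∑ i ∈ s, f i := by
  by_cases hp : p
  · obtain ⟨i, hi, hfi⟩ := h hp
    rw [ind_true hp]
    exact hfi.trans (Finset.single_le_sum hf hi)
  · rw [ind_false hp]; exact Finset.sum_nonneg hf

/-- The distorted probability on one fibre `S` (with threshold `1/2`): it charges no point more
than twice the uniform probability, and charges a set `B` of density `α` by at most `α ^ 2`. -/
lemma exists_kernel {S : Type*} [Fintype S] [Nonempty S] (B : S → Prop) :
    ∃ k : S → ℝ, (∀ s, 0 ≤ k s) ∧ ∑ s, k s = 1 ∧ (∀ s, k s ≤ 2 / Fintype.card S) ∧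
      ∑ s, k s * ind (B s) ≤ ((∑ s, ind (B s)) / Fintype.card S) ^ 2 := by
  set N : ℝ := (Fintype.card S : ℝ) with hN
  have hN0 : 0 < N := by rw [hN]; exact_mod_cast Fintype.card_pos
  set b : ℝ := ∑ s, ind (B s) with hb
  have hb0 : 0 ≤ b := Finset.sum_nonneg fun s _ => ind_nonneg _
  have hone : ∑ _s : S, (1 : ℝ) = N := by simp [hN]
  have hsq : ∀ s, ind (B s) * ind (B s) = ind (B s) := by
    intro s; unfold ind; split_ifs <;> norm_num
  -- If `α < 1/2`, the uniform measure on the complement of `B`; otherwise weight `2 / N` off `B`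
  -- and the remaining mass `2 * α - 1` spread evenly over `B`.
  by_cases hα : 2 * b < N
  · refine ⟨fun s => (1 - ind (B s)) / (N - b), fun s => ?_, ?_, fun s => ?_, ?_⟩
    · exact div_nonneg (by linarith [ind_le_one (B s)]) (by linarith)
    · rw [← Finset.sum_div, Finset.sum_sub_distrib, hone, div_self (by linarith)]
    · rw [div_le_div_iff₀ (by linarith) hN0]
      nlinarith [ind_nonneg (B s), ind_le_one (B s)]
    · have : ∀ s, (1 - ind (B s)) / (N - b) * ind (B s) = 0 := by
        intro s
        rw [div_mul_eq_mul_div, sub_mul, one_mul, hsq, sub_self, zero_div]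
      simp only [this, Finset.sum_const_zero]
      positivity
  · have hbp : 0 < b := by linarith
    refine ⟨fun s => (2 - ind (B s) * (N / b)) / N, fun s => ?_, ?_, fun s => ?_, ?_⟩
    · refine div_nonneg ?_ hN0.le
      have : N / b ≤ 2 := by rw [div_le_iff₀ hbp]; linarith
      have h0 : 0 ≤ N / b := by positivity
      nlinarith [ind_nonneg (B s), ind_le_one (B s)]
    · rw [← Finset.sum_div, Finset.sum_sub_distrib, ← Finset.sum_mul, ← hb]
      have : ∑ _s : S, (2 : ℝ) = 2 * N := by rw [← hone, Finset.mul_sum]; simp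
      rw [this]
      field_simp
      ring
    · refine div_le_div_of_nonneg_right ?_ hN0.le
      have : 0 ≤ ind (B s) * (N / b) := mul_nonneg (ind_nonneg _) (by positivity)
      linarith
    · have : ∀ s, (2 - ind (B s) * (N / b)) / N * ind (B s) = ind (B s) * ((2 - N / b) / N) := by
        intro s
        have := hsq s
        rw [div_mul_eq_mul_div, sub_mul, mul_right_comm, this]
        ring
      simp only [this]
      rw [← Finset.sum_mul, ← hb]
      have : b * ((2 - N / b) / N) = 2 * (b / N) - 1 := by field_simp
      rw [this]
      nlinarith [sq_nonneg (b / N - 1)]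

/-- The second moment on a fibre. `I i n` indicates that the base point lies in a class, `L i n s`
that the fibre point `s` does, and `κ i i'` bounds the correlation of the fibre conditions. -/
lemma sum_sq_expand {S J M : Type*} [Fintype S] (j : Finset J) (m : Finset M) (k : S → ℝ)
    (I : J → M → ℝ) (hI : ∀ i n, 0 ≤ I i n) (L : J → M → S → ℝ) (κ : J → J → ℝ)
    (hκ : ∀ i ∈ j, ∀ n ∈ m, ∀ i' ∈ j, ∀ n' ∈ m, ∑ s, k s * (L i n s * L i' n' s) ≤ κ i i') :
    ∑ s, k s * (∑ i ∈ j, ∑ n ∈ m, I i n * L i n s) ^ 2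
      ≤ ∑ i ∈ j, ∑ i' ∈ j, κ i i' * ((∑ n ∈ m, I i n) * ∑ n ∈ m, I i' n) := by
  have e1 : ∀ s, k s * (∑ i ∈ j, ∑ n ∈ m, I i n * L i n s) ^ 2
      = ∑ i ∈ j, ∑ i' ∈ j, ∑ n ∈ m, ∑ n' ∈ m,
        I i n * I i' n' * (k s * (L i n s * L i' n' s)) := by
    intro s
    rw [sq, Finset.sum_mul_sum, Finset.mul_sum]
    refine Finset.sum_congr rfl fun i _ => ?_
    rw [Finset.mul_sum]
    refine Finset.sum_congr rfl fun i' _ => ?_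
    rw [Finset.sum_mul_sum, Finset.mul_sum]
    refine Finset.sum_congr rfl fun n _ => ?_
    rw [Finset.mul_sum]
    refine Finset.sum_congr rfl fun n' _ => ?_
    ring
  simp only [e1]
  rw [Finset.sum_comm]
  refine Finset.sum_le_sum fun i hi => ?_
  rw [Finset.sum_comm]
  refine Finset.sum_le_sum fun i' hi' => ?_
  rw [Finset.sum_comm, Finset.sum_mul_sum, Finset.mul_sum]
  refine Finset.sum_le_sum fun n hn => ?_
  rw [Finset.sum_comm, Finset.mul_sum]
  refine Finset.sum_le_sum fun n' hn' => ?_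
  rw [← Finset.mul_sum, mul_comm]
  exact mul_le_mul_of_nonneg_right (hκ i hi n hn i' hi' n' hn') (mul_nonneg (hI _ _) (hI _ _))

/-- A uniform bound `F` for the second moments of the functions `f i` bounds all mixed moments, by
`2 * f i * f i' ≤ f i ^ 2 + f i' ^ 2`. -/
lemma sum_quad_le {X J : Type*} [Fintype X] (w : X → ℝ) (hw : ∀ x, 0 ≤ w x) (j : Finset J)
    (f : J → X → ℝ) (F : ℝ) (hf : ∀ i ∈ j, ∑ x, w x * f i x ^ 2 ≤ F) (κ : J → J → ℝ)
    (hκ : ∀ i i', 0 ≤ κ i i') :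
    ∑ x, w x * ∑ i ∈ j, ∑ i' ∈ j, κ i i' * (f i x * f i' x)
      ≤ (∑ i ∈ j, ∑ i' ∈ j, κ i i') * F := by
  simp only [Finset.mul_sum, Finset.sum_mul]
  rw [Finset.sum_comm]
  refine Finset.sum_le_sum fun i hi => ?_
  rw [Finset.sum_comm]
  refine Finset.sum_le_sum fun i' hi' => ?_
  calc ∑ x, w x * (κ i i' * (f i x * f i' x))
      ≤ ∑ x, κ i i' * ((w x * f i x ^ 2 + w x * f i' x ^ 2) / 2) := by
        refine Finset.sum_le_sum fun x _ => ?_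
        have h := mul_nonneg (mul_nonneg (hw x) (hκ i i')) (sq_nonneg (f i x - f i' x))
        nlinarith
    _ = κ i i' * ((∑ x, w x * f i x ^ 2 + ∑ x, w x * f i' x ^ 2) / 2) := by
        rw [← Finset.mul_sum, ← Finset.sum_div, Finset.sum_add_distrib]
    _ ≤ κ i i' * F := by
        refine mul_le_mul_of_nonneg_left ?_ (hκ _ _)
        linarith [hf i hi, hf i' hi']

/-- A bound for the distorted weight, in a fibre over a prime `P` of norm `q`, of the intersection
of a class modulo `P ^ i` and a class modulo `P ^ j`. -/
noncomputable def pairWeight (q : ℝ) (i j : ℕ) : ℝ :=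
  if max i j = 0 then 1 else 2 / q ^ max i j

lemma pairWeight_nonneg {q : ℝ} (hq : 2 ≤ q) (i j : ℕ) : 0 ≤ pairWeight q i j := by
  unfold pairWeight; split_ifs <;> positivity

lemma sum_pairWeight_le {q : ℝ} (hq : 2 ≤ q) (γ : ℕ) :
    ∑ i ∈ Finset.range (γ + 1), ∑ j ∈ Finset.range (γ + 1), pairWeight q i j ≤ 1 + 20 / q := by
  have key : ∑ i ∈ Finset.range (γ + 1), ∑ j ∈ Finset.range (γ + 1), pairWeight q i j
      ≤ 1 + 2 * (10 - (4 * γ + 10) / 2 ^ γ) / q := by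
    -- The pairs with maximum `n + 1` number `2 * n + 3`, and `q ^ (n + 1) ≥ 2 ^ n * q`.
    induction γ with
    | zero => simp [pairWeight]
    | succ n ih =>
      rw [Finset.sum_range_succ]
      simp only [Finset.sum_range_succ _ (n + 1)]
      rw [Finset.sum_add_distrib]
      have h1 : ∀ i ∈ Finset.range (n + 1), pairWeight q i (n + 1) = 2 / q ^ (n + 1) := by
        intro i hi
        rw [Finset.mem_range] at hi
        rw [pairWeight, max_eq_right (by omega), if_neg (by omega)]
      have h2 : ∀ i ∈ Finset.range (n + 1), pairWeight q (n + 1) i = 2 / q ^ (n + 1) := by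
        intro i hi
        rw [Finset.mem_range] at hi
        rw [pairWeight, max_eq_left (by omega), if_neg (by omega)]
      have h3 : pairWeight q (n + 1) (n + 1) = 2 / q ^ (n + 1) := by
        rw [pairWeight, max_self, if_neg (by omega)]
      rw [Finset.sum_congr rfl h1, Finset.sum_congr rfl h2, h3]
      simp only [Finset.sum_const, Finset.card_range, nsmul_eq_mul]
      have h4 : 2 / q ^ (n + 1) ≤ 2 / (2 ^ n * q) := by
        rw [pow_succ]
        gcongr
      have h5 : (2 * n + 3) * (2 / q ^ (n + 1)) ≤ (2 * n + 3) * (2 / (2 ^ n * q)) := by gcongr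
      have h6 : 1 + 2 * (10 - (4 * (n : ℝ) + 10) / 2 ^ n) / q + (2 * n + 3) * (2 / (2 ^ n * q))
          = 1 + 2 * (10 - (4 * (n + 1) + 10) / 2 ^ (n + 1)) / q := by
        rw [pow_succ]
        field_simp
        ring
      push_cast
      rw [← h6]
      linarith
  refine key.trans ?_
  have : (0 : ℝ) ≤ (4 * γ + 10) / 2 ^ γ := by positivity
  gcongr
  linarith

lemma sum_inv_pow_le {q : ℝ} (hq : 2 ≤ q) (γ : ℕ) :
    ∑ j ∈ Finset.Icc 1 γ, 1 / q ^ j ≤ 2 / q := by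
  have key : ∑ j ∈ Finset.Icc 1 γ, 1 / q ^ j ≤ (2 - 2 / 2 ^ γ) / q := by
    induction γ with
    | zero => simp
    | succ n ih =>
      rw [Finset.sum_Icc_succ_top (by omega)]
      have h4 : 1 / q ^ (n + 1) ≤ 1 / (2 ^ n * q) := by
        rw [pow_succ]
        gcongr
      have h6 : (2 - 2 / (2 : ℝ) ^ n) / q + 1 / (2 ^ n * q) = (2 - 2 / 2 ^ (n + 1)) / q := by
        rw [pow_succ]
        field_simp
        ring
      linarith
  refine key.trans ?_
  have : (0 : ℝ) ≤ 2 / 2 ^ γ := by positivity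
  gcongr
  linarith

/-- The factor by which the `√N`-weighted sum over smooth moduli grows at one prime. -/
lemma sum_sqrt_le {q : ℝ} (hq : 2 ≤ q) (n : ℕ) :
    ∑ j ∈ Finset.range n, 2 / q ^ j * √(q ^ j) ≤ 8 := by
  have e : ∀ j : ℕ, 2 / q ^ j * √(q ^ j) = 2 * (√q)⁻¹ ^ j := by
    intro j
    have h0 : 0 < √q := Real.sqrt_pos.2 (by linarith)
    have h1 : q ^ j = (√q ^ j) ^ 2 := by
      rw [← pow_mul, mul_comm, pow_mul, Real.sq_sqrt (by linarith)]
    rw [h1, Real.sqrt_sq (by positivity), inv_pow]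
    field_simp
  simp only [e]
  rw [← Finset.mul_sum]
  have h2 : (√q)⁻¹ ≤ 3 / 4 := by
    have : 4 / 3 ≤ √q := Real.le_sqrt_of_sq_le (by norm_num; linarith)
    rw [inv_le_comm₀ (by linarith) (by norm_num)]
    linarith
  have h3 : ∑ j ∈ Finset.range n, (√q)⁻¹ ^ j ≤ ∑ j ∈ Finset.range n, (3 / 4 : ℝ) ^ j := by
    gcongr
  have h4 : ∑ j ∈ Finset.range n, (3 / 4 : ℝ) ^ j ≤ 4 := by
    rw [geom_sum_eq (by norm_num)]
    have : (0 : ℝ) ≤ (3 / 4) ^ n := by positivity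
    rw [div_le_iff_of_neg (by norm_num)]
    linarith
  linarith

/-! ### Fibres over a prime power -/

section Fibre

variable {K : Type*} [Field K] [NumberField K]

/-- A class modulo `P ^ j` has density `(N P) ^ (-j)` in the fibre `𝓞 K ⧸ P ^ γ`, on which `ρ` is
any choice of representatives. -/
lemma card_class (P : Ideal (𝓞 K)) (hP : Prime P) (γ j : ℕ) (hj : j ≤ γ) [Fintype (𝓞 K ⧸ P ^ γ)]
    (ρ : 𝓞 K ⧸ P ^ γ → 𝓞 K) (hρ : ∀ s, Ideal.Quotient.mk (P ^ γ) (ρ s) = s) (b : 𝓞 K) :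
    ∑ s, ind (ρ s - b ∈ P ^ j) = Fintype.card (𝓞 K ⧸ P ^ γ) / (Ideal.absNorm P : ℝ) ^ j := by
  have hle : P ^ γ ≤ P ^ j := Ideal.pow_le_pow_right hj
  have hPj : P ^ j ≠ ⊥ := pow_ne_zero _ hP.ne_zero
  let φ := Ideal.Quotient.factor hle
  have hφ : Function.Surjective φ := Ideal.Quotient.factor_surjective hle
  have hmem : ∀ s b, ρ s - b ∈ P ^ j ↔ φ s = Ideal.Quotient.mk (P ^ j) b := by
    intro s b
    rw [← Ideal.Quotient.eq]
    conv_rhs => rw [← hρ s]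
    rfl
  have : Finite (𝓞 K ⧸ P ^ j) := Ideal.finiteQuotientOfFreeOfNeBot _ hPj
  let _ : Fintype (𝓞 K ⧸ P ^ j) := Fintype.ofFinite _
  have hcard : ∀ t, (Finset.univ.filter (fun s => φ s = t)).card
      = (Finset.univ.filter (fun s => φ s = Ideal.Quotient.mk (P ^ j) b)).card := by
    intro t
    exact AddMonoidHom.card_fiber_eq_of_mem_range φ (hφ t) (hφ _)
  have htot : Fintype.card (𝓞 K ⧸ P ^ γ) = Fintype.card (𝓞 K ⧸ P ^ j) *
      (Finset.univ.filter (fun s => φ s = Ideal.Quotient.mk (P ^ j) b)).card := by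
    rw [← Finset.card_univ, Finset.card_eq_sum_card_fiberwise (t := Finset.univ) (f := φ)
      (fun _ _ => by simp), Finset.sum_congr rfl (fun t _ => hcard t), Finset.sum_const,
      Finset.card_univ, smul_eq_mul]
  have hN : Fintype.card (𝓞 K ⧸ P ^ j) = Ideal.absNorm P ^ j := by
    rw [← map_pow, Ideal.absNorm_apply, Submodule.cardQuot_apply, Nat.card_eq_fintype_card]
  have h2 : (2 : ℝ) ≤ Ideal.absNorm P := by exact_mod_cast two_le_absNorm hP
  rw [eq_div_iff (by positivity), htot, hN]
  have : ∑ s, ind (ρ s - b ∈ P ^ j)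
      = ((Finset.univ.filter (fun s => φ s = Ideal.Quotient.mk (P ^ j) b)).card : ℝ) := by
    unfold ind
    simp only [hmem]
    rw [Finset.sum_boole]
  rw [this]
  push_cast
  ring

/-- The distorted weight of a class modulo `P ^ j` is at most twice its density. -/
lemma kernel_class_le (P : Ideal (𝓞 K)) (hP : Prime P) (γ j : ℕ) (hj : j ≤ γ)
    [Fintype (𝓞 K ⧸ P ^ γ)]
    (ρ : 𝓞 K ⧸ P ^ γ → 𝓞 K) (hρ : ∀ s, Ideal.Quotient.mk (P ^ γ) (ρ s) = s) (b : 𝓞 K)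
    (k : 𝓞 K ⧸ P ^ γ → ℝ) (hk : ∀ s, k s ≤ 2 / Fintype.card (𝓞 K ⧸ P ^ γ)) :
    ∑ s, k s * ind (ρ s - b ∈ P ^ j) ≤ 2 / (Ideal.absNorm P : ℝ) ^ j := by
  have h2 : (2 : ℝ) ≤ Ideal.absNorm P := by exact_mod_cast two_le_absNorm hP
  have hc : (0 : ℝ) < Fintype.card (𝓞 K ⧸ P ^ γ) := by exact_mod_cast Fintype.card_pos
  calc ∑ s, k s * ind (ρ s - b ∈ P ^ j)
      ≤ ∑ s, 2 / Fintype.card (𝓞 K ⧸ P ^ γ) * ind (ρ s - b ∈ P ^ j) :=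
        Finset.sum_le_sum fun s _ => mul_le_mul_of_nonneg_right (hk s) (ind_nonneg _)
    _ = 2 / (Ideal.absNorm P : ℝ) ^ j := by
        rw [← Finset.mul_sum, card_class P hP γ j hj ρ hρ b]
        field_simp

lemma kernel_pair_le (P : Ideal (𝓞 K)) (hP : Prime P) (γ i j : ℕ) (hi : i ≤ γ) (hj : j ≤ γ)
    [Fintype (𝓞 K ⧸ P ^ γ)]
    (ρ : 𝓞 K ⧸ P ^ γ → 𝓞 K) (hρ : ∀ s, Ideal.Quotient.mk (P ^ γ) (ρ s) = s) (b c : 𝓞 K)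
    (k : 𝓞 K ⧸ P ^ γ → ℝ) (hk0 : ∀ s, 0 ≤ k s) (hk1 : ∑ s, k s = 1)
    (hk : ∀ s, k s ≤ 2 / Fintype.card (𝓞 K ⧸ P ^ γ)) :
    ∑ s, k s * (ind (ρ s - b ∈ P ^ i) * ind (ρ s - c ∈ P ^ j))
      ≤ pairWeight (Ideal.absNorm P) i j := by
  unfold pairWeight
  split_ifs with h
  · rw [← hk1]
    refine Finset.sum_le_sum fun s _ => ?_
    refine mul_le_of_le_one_right (hk0 s) ?_
    exact mul_le_one₀ (ind_le_one _) (ind_nonneg _) (ind_le_one _)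
  · rcases le_total i j with hij | hij
    · rw [max_eq_right hij]
      refine le_trans (Finset.sum_le_sum fun s _ => ?_) (kernel_class_le P hP γ j hj ρ hρ c k hk)
      exact mul_le_mul_of_nonneg_left
        (mul_le_of_le_one_left (ind_nonneg _) (ind_le_one _)) (hk0 s)
    · rw [max_eq_left hij]
      refine le_trans (Finset.sum_le_sum fun s _ => ?_) (kernel_class_le P hP γ i hi ρ hρ b k hk)
      exact mul_le_mul_of_nonneg_left
        (mul_le_of_le_one_right (ind_nonneg _) (ind_le_one _)) (hk0 s)

/-- Every prime factor of `m` has norm at most `Y`. -/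
def IsSmooth (Y : ℕ) (m : Ideal (𝓞 K)) : Prop :=
  ∀ p : Ideal (𝓞 K), Prime p → p ∣ m → Ideal.absNorm p ≤ Y

end Fibre

/-! ### The distorted measures -/

universe u

/-- The distorted probability measure reached after the primes in `T` have been treated, in the
form of a finite set `X` of sample points with weights `w` and representatives `r x` in `𝓞 K`.
`D` is the set of divisors of `(∏ P ∈ T, P) ^ γ`. The last three fields control the second moment
of the number of classes `b m + m`, `m ∈ D`, containing a random point, the probabilities of the
classes with `Y`-smooth modulus, and the probability of lying in one of the given classes
`a m + m` with `m ∈ D` not `Y`-smooth. -/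
structure Distortion (K : Type u) [Field K] [NumberField K] (γ Y : ℕ)
    (a : Ideal (𝓞 K) → 𝓞 K) (h : ℕ → ℝ) (T : Finset (Ideal (𝓞 K))) where
  X : Type u
  [fin : Fintype X]
  w : X → ℝ
  r : X → 𝓞 K
  D : Finset (Ideal (𝓞 K))
  w_nonneg : ∀ x, 0 ≤ w x
  w_sum : ∑ x, w x = 1
  mem_D : ∀ m, m ∈ D ↔ m ∣ (∏ P ∈ T, P) ^ γ
  second_moment : ∀ b : Ideal (𝓞 K) → 𝓞 K,
    ∑ x, w x * (∑ m ∈ D, ind (r x - b m ∈ m)) ^ 2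
      ≤ ∏ P ∈ T, (1 + 20 / (Ideal.absNorm P : ℝ))
  smooth_le : ∀ b : Ideal (𝓞 K) → 𝓞 K,
    ∑ m ∈ D with IsSmooth Y m, (∑ x, w x * ind (r x - b m ∈ m)) * √(Ideal.absNorm m : ℝ)
      ≤ 8 ^ (T.filter (fun P => Ideal.absNorm P ≤ Y)).card
  rough_le : ∑ x, w x * ind (∃ m ∈ D, ¬IsSmooth Y m ∧ r x - a m ∈ m)
      ≤ ∑ P ∈ T with Y < Ideal.absNorm P, h (Ideal.absNorm P)

section Step

variable {K : Type u} [Field K] [NumberField K] {γ Y : ℕ}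
  {a : Ideal (𝓞 K) → 𝓞 K} {h : ℕ → ℝ}

lemma isSmooth_one : IsSmooth Y (1 : Ideal (𝓞 K)) := fun _ hp hd =>
  absurd (isUnit_of_dvd_one hd) hp.not_isUnit

lemma distortion_empty : Nonempty (Distortion K γ Y a h ∅) := by
  refine ⟨⟨PUnit, fun _ => 1, fun _ => 0, {1}, by simp, by simp, ?_, ?_, ?_, ?_⟩⟩
  · intro m
    rw [Finset.prod_empty, one_pow, Finset.mem_singleton, ← isUnit_iff_dvd_one, isUnit_iff_eq_one]
  · intro b
    rw [Finset.sum_singleton]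
    simp [ind]
  · intro b
    rw [Finset.filter_singleton, if_pos isSmooth_one]
    simp [ind]
  · have : ¬∃ m ∈ ({1} : Finset (Ideal (𝓞 K))), ¬IsSmooth Y m ∧ (0 : 𝓞 K) - a m ∈ m := by
      rintro ⟨m, hm, hns, -⟩
      rw [Finset.mem_singleton] at hm
      exact hns (hm ▸ isSmooth_one)
    simp only [ind_false this]
    simp

/-- The inductive step: a prime `P` of norm at least that of all primes in `T` is treated. -/
lemma distortion_insert (T : Finset (Ideal (𝓞 K))) (P : Ideal (𝓞 K)) (hT : ∀ Q ∈ T, Prime Q)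
    (hP : Prime P) (hPT : P ∉ T) (hmax : ∀ Q ∈ T, Ideal.absNorm Q ≤ Ideal.absNorm P)
    (hh : (∏ Q ∈ T, (1 + 20 / (Ideal.absNorm Q : ℝ))) * (2 / (Ideal.absNorm P : ℝ)) ^ 2
      ≤ h (Ideal.absNorm P))
    (hh0 : ∀ q, 0 ≤ h q)
    (Δ : Distortion K γ Y a h T) : Nonempty (Distortion K γ Y a h (insert P T)) := by
  obtain ⟨X, w, r, D, hw0, hw1, hD, hsec, hsm, hro⟩ := Δ
  set q : ℝ := (Ideal.absNorm P : ℝ) with hq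
  have hq2 : 2 ≤ q := by rw [hq]; exact_mod_cast two_le_absNorm hP
  set M := (∏ Q ∈ T, Q) ^ γ with hM
  have hMP : (∏ Q ∈ insert P T, Q) ^ γ = M * P ^ γ := by
    rw [Finset.prod_insert hPT, mul_pow, mul_comm]
  have hcop : IsCoprime M (P ^ γ) := by
    refine IsCoprime.pow (IsCoprime.prod_left fun Q hQ => ?_)
    have hmQ : Q.IsMaximal := (Ideal.isPrime_of_prime (hT Q hQ)).isMaximal (hT Q hQ).ne_zero
    have hmP : P.IsMaximal := (Ideal.isPrime_of_prime hP).isMaximal hP.ne_zero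
    refine Ideal.isCoprime_of_isMaximal ?_
    rintro rfl
    exact hPT hQ
  have hfin : Finite (𝓞 K ⧸ P ^ γ) :=
    Ideal.finiteQuotientOfFreeOfNeBot _ (pow_ne_zero _ hP.ne_zero)
  let _ : Fintype (𝓞 K ⧸ P ^ γ) := Fintype.ofFinite _
  -- Representatives of the product space, by the Chinese remainder theorem.
  have hex : ∀ (x : X) (s : 𝓞 K ⧸ P ^ γ), ∃ y : 𝓞 K,
      y - r x ∈ M ∧ Ideal.Quotient.mk (P ^ γ) y = s := by
    intro x s
    obtain ⟨s, rfl⟩ := Ideal.Quotient.mk_surjective s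
    obtain ⟨u, hu, v, hv, huv⟩ := Ideal.isCoprime_iff_exists.1 hcop
    refine ⟨v * r x + u * s, ?_, ?_⟩
    · have : v * r x + u * s - r x = (s - r x) * u := by
        rw [← eq_sub_iff_add_eq'] at huv
        rw [huv]; ring
      rw [this]
      exact M.mul_mem_left _ hu
    · rw [Ideal.Quotient.eq]
      have : v * r x + u * s - s = (r x - s) * v := by
        rw [← eq_sub_iff_add_eq] at huv
        rw [huv]; ring
      rw [this]
      exact Ideal.mul_mem_left _ _ hv
  choose ρ hρM hρP using hex
  -- Membership modulo `m ∈ D` depends on the base point only.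
  have hcoarse : ∀ m ∈ D, ∀ x s b, ρ x s - b ∈ m → r x - b ∈ m := by
    intro m hm x s b hb
    have h1 : ρ x s - r x ∈ m := Ideal.dvd_iff_le.1 ((hD m).1 hm) (hρM x s)
    have : r x - b = (ρ x s - b) - (ρ x s - r x) := by ring
    rw [this]
    exact m.sub_mem hb h1
  have hsplit : ∀ m ∈ D, ∀ j x s b, ρ x s - b ∈ m * P ^ j →
      r x - b ∈ m ∧ ρ x s - b ∈ P ^ j := by
    intro m hm j x s b hb
    have h1 : m * P ^ j ≤ m := Ideal.mul_le_left
    have h2 : m * P ^ j ≤ P ^ j := Ideal.mul_le_right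
    exact ⟨hcoarse m hm x s b (h1 hb), h2 hb⟩
  -- The set to be avoided in the fibre over `x`: points in a class whose modulus `P` divides.
  choose k hk0 hk1 hk2 hkB using fun x : X => exists_kernel
    (fun s : 𝓞 K ⧸ P ^ γ => ∃ j ∈ Finset.Icc 1 γ, ∃ m ∈ D,
      ρ x s - a (m * P ^ j) ∈ m * P ^ j)
  set D' := (Finset.range (γ + 1) ×ˢ D).image (fun t => t.2 * P ^ t.1) with hD'
  have hmem' : ∀ d, d ∈ D' ↔ ∃ j ≤ γ, ∃ m ∈ D, d = m * P ^ j := by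
    intro d
    simp only [hD', Finset.mem_image, Finset.mem_product, Finset.mem_range, Prod.exists]
    constructor
    · rintro ⟨j, m, ⟨hj, hm⟩, rfl⟩
      exact ⟨j, by omega, m, hm, rfl⟩
    · rintro ⟨j, hj, m, hm, rfl⟩
      exact ⟨j, m, ⟨by omega, hm⟩, rfl⟩
  have hsumD' : ∀ f : Ideal (𝓞 K) → ℝ, (∀ d, 0 ≤ f d) →
      ∑ d ∈ D', f d ≤ ∑ j ∈ Finset.range (γ + 1), ∑ m ∈ D, f (m * P ^ j) := by
    intro f hf
    rw [← Finset.sum_product' (f := fun j m => f (m * P ^ j))]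
    exact Finset.sum_image_le_of_nonneg (fun _ _ => hf _)
  -- The new measure projects to the old one.
  have hmarg : ∀ f : X → ℝ, ∑ z : X × (𝓞 K ⧸ P ^ γ), w z.1 * k z.1 z.2 * f z.1
      = ∑ x, w x * f x := by
    intro f
    rw [Fintype.sum_prod_type]
    refine Finset.sum_congr rfl fun x _ => ?_
    simp only
    rw [← Finset.sum_mul, ← Finset.mul_sum, hk1, mul_one]
  refine ⟨⟨X × (𝓞 K ⧸ P ^ γ), fun z => w z.1 * k z.1 z.2, fun z => ρ z.1 z.2, D', ?_, ?_, ?_,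
    ?_, ?_, ?_⟩⟩
  · exact fun z => mul_nonneg (hw0 _) (hk0 _ _)
  · simpa [hw1] using hmarg (fun _ => 1)
  · intro d
    rw [hmem', hMP]
    constructor
    · rintro ⟨j, hj, m, hm, rfl⟩
      exact mul_dvd_mul ((hD m).1 hm) (pow_dvd_pow _ hj)
    · intro hd
      obtain ⟨m, n, hm, hn, rfl⟩ := exists_dvd_and_dvd_of_dvd_mul hd
      obtain ⟨j, hj, hnj⟩ := (dvd_prime_pow hP _).1 hn
      exact ⟨j, hj, m, (hD m).2 hm, by rw [associated_iff_eq.1 hnj]⟩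
  · -- Group the moduli `m * P ^ j` by `j`. For each `j` the old bound applies to the classes
    -- `b (m * P ^ j) + m`; conditions modulo powers of `P` contribute the factors `pairWeight`.
    intro b
    rw [Fintype.sum_prod_type, Finset.prod_insert hPT]
    have hF := sum_quad_le w hw0 (Finset.range (γ + 1))
      (fun j x => ∑ m ∈ D, ind (r x - b (m * P ^ j) ∈ m)) _
      (fun j _ => hsec (fun m => b (m * P ^ j))) (pairWeight q) (pairWeight_nonneg hq2)
    refine le_trans ?_ (hF.trans (mul_le_mul_of_nonneg_right (sum_pairWeight_le hq2 γ)
      (Finset.prod_nonneg fun _ _ => by positivity)))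
    refine Finset.sum_le_sum fun x _ => ?_
    simp only [mul_assoc]
    rw [← Finset.mul_sum]
    refine mul_le_mul_of_nonneg_left ?_ (hw0 x)
    have hE := sum_sq_expand (Finset.range (γ + 1)) D (k x)
      (fun j m => ind (r x - b (m * P ^ j) ∈ m)) (fun _ _ => ind_nonneg _)
      (fun j m s => ind (ρ x s - b (m * P ^ j) ∈ P ^ j)) (pairWeight q)
      (fun i hi m _ j hj n _ => kernel_pair_le P hP γ i j
        (by rw [Finset.mem_range] at hi; omega) (by rw [Finset.mem_range] at hj; omega)
        (ρ x) (hρP x) _ _ (k x) (hk0 x) (hk1 x) (hk2 x))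
    refine le_trans (Finset.sum_le_sum fun s _ => ?_) hE
    refine mul_le_mul_of_nonneg_left ?_ (hk0 x s)
    refine pow_le_pow_left₀ (Finset.sum_nonneg fun _ _ => ind_nonneg _) ?_ 2
    refine (hsumD' _ (fun _ => ind_nonneg _)).trans ?_
    exact Finset.sum_le_sum fun j _ => Finset.sum_le_sum fun m hm =>
      ind_le_mul (hsplit m hm j x s _)
  · -- If `P` has norm at most `Y`, the exponents `j` contribute a factor of at most `8`;
    -- otherwise no smooth modulus is divisible by `P`, and the sum does not grow.
    intro b
    have hclass : ∀ j ≤ γ, ∀ m ∈ D, ∀ c, ∑ z : X × (𝓞 K ⧸ P ^ γ),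
        w z.1 * k z.1 z.2 * ind (ρ z.1 z.2 - c ∈ m * P ^ j)
        ≤ 2 / q ^ j * ∑ x, w x * ind (r x - c ∈ m) := by
      intro j hj m hm c
      rw [Fintype.sum_prod_type, Finset.mul_sum]
      refine Finset.sum_le_sum fun x _ => ?_
      calc ∑ s, w x * k x s * ind (ρ x s - c ∈ m * P ^ j)
          ≤ ∑ s, w x * ind (r x - c ∈ m) * (k x s * ind (ρ x s - c ∈ P ^ j)) := by
            refine Finset.sum_le_sum fun s _ => ?_
            have := mul_le_mul_of_nonneg_left (ind_le_mul (hsplit m hm j x s c))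
              (mul_nonneg (hw0 x) (hk0 x s))
            linarith
        _ ≤ w x * ind (r x - c ∈ m) * (2 / q ^ j) := by
            rw [← Finset.mul_sum]
            exact mul_le_mul_of_nonneg_left
              (kernel_class_le P hP γ j hj (ρ x) (hρP x) c (k x) (hk2 x))
              (mul_nonneg (hw0 x) (ind_nonneg _))
        _ = _ := by ring
    by_cases hPY : Ideal.absNorm P ≤ Y
    · have hc : ((insert P T).filter (fun Q => Ideal.absNorm Q ≤ Y)).card
          = (T.filter (fun Q => Ideal.absNorm Q ≤ Y)).card + 1 := by
        rw [Finset.filter_insert, if_pos hPY, Finset.card_insert_of_notMem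
          (fun h => hPT (Finset.mem_filter.1 h).1)]
      rw [hc, pow_succ, Finset.sum_filter]
      set G := (8 : ℝ) ^ (T.filter (fun Q => Ideal.absNorm Q ≤ Y)).card
      have hpos : ∀ d : Ideal (𝓞 K), 0 ≤ ∑ z : X × (𝓞 K ⧸ P ^ γ),
          w z.1 * k z.1 z.2 * ind (ρ z.1 z.2 - b d ∈ d) := fun d =>
        Finset.sum_nonneg fun z _ => mul_nonneg (mul_nonneg (hw0 _) (hk0 _ _)) (ind_nonneg _)
      refine (hsumD' _ (fun d => ?_)).trans ?_
      · split_ifs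
        · exact mul_nonneg (hpos d) (Real.sqrt_nonneg _)
        · exact le_rfl
      calc _ ≤ ∑ j ∈ Finset.range (γ + 1), 2 / q ^ j * √(q ^ j) * G := ?_
        _ = (∑ j ∈ Finset.range (γ + 1), 2 / q ^ j * √(q ^ j)) * G :=
            (Finset.sum_mul _ _ _).symm
        _ ≤ 8 * G := mul_le_mul_of_nonneg_right (sum_sqrt_le hq2 _) (by positivity)
        _ = G * 8 := mul_comm _ _
      refine Finset.sum_le_sum fun j hj => ?_
      have hj' : j ≤ γ := by rw [Finset.mem_range] at hj; omega
      refine le_trans ?_ (mul_le_mul_of_nonneg_left (hsm (fun m => b (m * P ^ j)))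
        (mul_nonneg (by positivity) (Real.sqrt_nonneg _)))
      rw [Finset.sum_filter, Finset.mul_sum]
      refine Finset.sum_le_sum fun m hm => ?_
      by_cases hs : IsSmooth Y (m * P ^ j)
      · have hs' : IsSmooth Y m := fun p hp hd => hs p hp (hd.mul_right _)
        rw [if_pos hs, if_pos hs', map_mul, map_pow, Nat.cast_mul, Nat.cast_pow, ← hq,
          Real.sqrt_mul (by positivity)]
        refine (mul_le_mul_of_nonneg_right (hclass j hj' m hm _) (by positivity)).trans
          (le_of_eq ?_)
        ring
      · rw [if_neg hs]
        refine mul_nonneg (by positivity) ?_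
        split_ifs
        · exact mul_nonneg (Finset.sum_nonneg fun x _ => mul_nonneg (hw0 _) (ind_nonneg _))
            (Real.sqrt_nonneg _)
        · exact le_rfl
    · have hc : (insert P T).filter (fun Q => Ideal.absNorm Q ≤ Y)
          = T.filter (fun Q => Ideal.absNorm Q ≤ Y) := by
        rw [Finset.filter_insert, if_neg hPY]
      rw [hc]
      have hsub : D'.filter (IsSmooth Y) ⊆ D.filter (IsSmooth Y) := by
        intro d hd
        obtain ⟨hd, hs⟩ := Finset.mem_filter.1 hd
        obtain ⟨j, hj, m, hm, rfl⟩ := (hmem' d).1 hd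
        have : j = 0 := by
          by_contra hj0
          exact hPY (hs P hP ((dvd_pow_self P hj0).mul_left m))
        subst this
        rw [pow_zero, mul_one] at hs ⊢
        exact Finset.mem_filter.2 ⟨hm, hs⟩
      refine le_trans ?_ (hsm b)
      refine (Finset.sum_le_sum_of_subset_of_nonneg hsub fun d _ _ => mul_nonneg
        (Finset.sum_nonneg fun z _ => mul_nonneg (mul_nonneg (hw0 _) (hk0 _ _)) (ind_nonneg _))
        (Real.sqrt_nonneg _)).trans ?_
      refine Finset.sum_le_sum fun m hm => ?_
      refine mul_le_mul_of_nonneg_right ?_ (Real.sqrt_nonneg _)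
      rw [← hmarg (fun x => ind (r x - b m ∈ m))]
      exact Finset.sum_le_sum fun z _ => mul_le_mul_of_nonneg_left
        (ind_mono (hcoarse m (Finset.mem_filter.1 hm).1 _ _ _))
        (mul_nonneg (hw0 _) (hk0 _ _))
  · -- A point in a rough class lies in an old rough class or in the avoided set. The latter has
    -- weight at most `α ^ 2` in each fibre, and the average of `α ^ 2` is a second moment.
    by_cases hPY : Y < Ideal.absNorm P
    · rw [Finset.filter_insert, if_pos hPY, Finset.sum_insert
        (fun h => hPT (Finset.mem_filter.1 h).1), add_comm]
      -- The density `α` of the avoided set, by a union bound.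
      have hα : ∀ x, (∑ s, ind (∃ j ∈ Finset.Icc 1 γ, ∃ m ∈ D,
            ρ x s - a (m * P ^ j) ∈ m * P ^ j)) / (Fintype.card (𝓞 K ⧸ P ^ γ) : ℝ)
          ≤ ∑ j ∈ Finset.Icc 1 γ, 1 / q ^ j * ∑ m ∈ D, ind (r x - a (m * P ^ j) ∈ m) := by
        intro x
        have hc : (0 : ℝ) < Fintype.card (𝓞 K ⧸ P ^ γ) := by exact_mod_cast Fintype.card_pos
        rw [div_le_iff₀ hc]
        calc _ ≤ ∑ s, ∑ j ∈ Finset.Icc 1 γ, ∑ m ∈ D, ind (r x - a (m * P ^ j) ∈ m) *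
                ind (ρ x s - a (m * P ^ j) ∈ P ^ j) := by
              refine Finset.sum_le_sum fun s _ => ?_
              refine ind_le_sum _ _ _ (fun j _ => Finset.sum_nonneg fun m _ =>
                mul_nonneg (ind_nonneg _) (ind_nonneg _)) ?_
              rintro ⟨j, hj, m, hm, hmem⟩
              refine ⟨j, hj, le_trans ?_ (Finset.single_le_sum (fun m _ =>
                mul_nonneg (ind_nonneg _) (ind_nonneg _)) hm)⟩
              have := hsplit m hm j x s _ hmem
              rw [ind_true this.1, ind_true this.2, one_mul]
          _ = ∑ j ∈ Finset.Icc 1 γ, ∑ m ∈ D, ind (r x - a (m * P ^ j) ∈ m) *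
                ∑ s, ind (ρ x s - a (m * P ^ j) ∈ P ^ j) := by
              rw [Finset.sum_comm]
              refine Finset.sum_congr rfl fun j _ => ?_
              rw [Finset.sum_comm]
              refine Finset.sum_congr rfl fun m _ => ?_
              rw [Finset.mul_sum]
          _ = _ := by
              rw [Finset.sum_mul]
              refine Finset.sum_congr rfl fun j hj => ?_
              rw [Finset.mul_sum, Finset.sum_mul]
              refine Finset.sum_congr rfl fun m _ => ?_
              rw [card_class P hP γ j (Finset.mem_Icc.1 hj).2 (ρ x) (hρP x)]
              ring
      have hB : ∑ x, w x * (∑ j ∈ Finset.Icc 1 γ,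
            1 / q ^ j * ∑ m ∈ D, ind (r x - a (m * P ^ j) ∈ m)) ^ 2
          ≤ h (Ideal.absNorm P) := by
        have hF := sum_quad_le w hw0 (Finset.Icc 1 γ)
          (fun j x => ∑ m ∈ D, ind (r x - a (m * P ^ j) ∈ m)) _
          (fun j _ => hsec (fun m => a (m * P ^ j))) (fun i j => 1 / q ^ i * (1 / q ^ j))
          (fun _ _ => by positivity)
        refine le_trans (le_of_eq ?_) (hF.trans (le_trans ?_ hh))
        · refine Finset.sum_congr rfl fun x _ => ?_
          rw [sq, Finset.sum_mul_sum]
          congr 1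
          refine Finset.sum_congr rfl fun i _ => Finset.sum_congr rfl fun j _ => ?_
          ring
        · rw [← Finset.sum_mul_sum, ← sq, mul_comm]
          refine mul_le_mul_of_nonneg_left ?_ (Finset.prod_nonneg fun _ _ => by positivity)
          exact pow_le_pow_left₀ (Finset.sum_nonneg fun _ _ => by positivity)
            (sum_inv_pow_le hq2 γ) 2
      refine le_trans ?_ (add_le_add hro hB)
      rw [← hmarg, Fintype.sum_prod_type, Fintype.sum_prod_type, ← Finset.sum_add_distrib]
      refine Finset.sum_le_sum fun x _ => ?_
      calc _ ≤ ∑ s, (w x * k x s * ind (∃ m ∈ D, ¬IsSmooth Y m ∧ r x - a m ∈ m) +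
              w x * (k x s * ind (∃ j ∈ Finset.Icc 1 γ, ∃ m ∈ D,
                ρ x s - a (m * P ^ j) ∈ m * P ^ j))) := by
            refine Finset.sum_le_sum fun s _ => ?_
            rw [← mul_assoc, ← mul_add]
            refine mul_le_mul_of_nonneg_left (ind_le_add ?_) (mul_nonneg (hw0 _) (hk0 _ _))
            rintro ⟨d, hd, hns, hmem⟩
            obtain ⟨j, hj, m, hm, rfl⟩ := (hmem' d).1 hd
            rcases Nat.eq_zero_or_pos j with rfl | hj0
            · rw [pow_zero, mul_one] at hns hmem
              exact Or.inl ⟨m, hm, hns, hcoarse m hm _ _ _ hmem⟩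
            · exact Or.inr ⟨j, Finset.mem_Icc.2 ⟨hj0, hj⟩, m, hm, hmem⟩
        _ ≤ _ := by
            rw [Finset.sum_add_distrib, ← Finset.mul_sum]
            gcongr
            · exact hw0 x
            · refine (hkB x).trans (pow_le_pow_left₀ ?_ (hα x) 2)
              exact div_nonneg (Finset.sum_nonneg fun _ _ => ind_nonneg _) (Nat.cast_nonneg _)
    · -- All primes treated so far have norm at most `Y`, so there is no rough modulus yet.
      have hall : ∀ d ∈ D', IsSmooth Y d := by
        intro d hd p hp hpd
        obtain ⟨j, hj, m, hm, rfl⟩ := (hmem' d).1 hd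
        rcases hp.dvd_or_dvd hpd with h1 | h1
        · obtain ⟨Q, hQ, hpQ⟩ := (hp.dvd_finsetProd_iff _).1
            (hp.dvd_of_dvd_pow (h1.trans ((hD m).1 hm)))
          rw [(prime_dvd_prime_iff_eq hp (hT Q hQ)).1 hpQ]
          have := hmax Q hQ
          omega
        · rw [(prime_dvd_prime_iff_eq hp hP).1 (hp.dvd_of_dvd_pow h1)]
          omega
      have : ∀ z : X × (𝓞 K ⧸ P ^ γ),
          ind (∃ m ∈ D', ¬IsSmooth Y m ∧ ρ z.1 z.2 - a m ∈ m) = 0 := fun z =>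
        ind_false (by rintro ⟨m, hm, hns, _⟩; exact hns (hall m hm))
      simp only [this, mul_zero, Finset.sum_const_zero]
      exact Finset.sum_nonneg fun _ _ => hh0 _

end Step

/-! ### Uncovered points -/

section Conclusion

variable {K : Type u} [Field K] [NumberField K]

/-- The primes of `T` can be treated in order of increasing norm (ties are broken arbitrarily). The
function `h` bounds the weight newly covered at a prime of norm `q`. -/
lemma exists_distortion (γ Y : ℕ) (a : Ideal (𝓞 K) → 𝓞 K) (h : ℕ → ℝ) (hh0 : ∀ q, 0 ≤ h q)
    (hh : ∀ (T : Finset (Ideal (𝓞 K))) (q : ℕ), 1 ≤ q → (∀ P ∈ T, Prime P) →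
      (∀ P ∈ T, Ideal.absNorm P ≤ q) →
      (∏ P ∈ T, (1 + 20 / (Ideal.absNorm P : ℝ))) * (2 / (q : ℝ)) ^ 2 ≤ h q)
    (T : Finset (Ideal (𝓞 K))) :
    (∀ P ∈ T, Prime P) → Nonempty (Distortion K γ Y a h T) := by
  refine Finset.induction_on_max_value (fun P => Ideal.absNorm P) T ?_ ?_
  · exact fun _ => distortion_empty
  · intro P T hPT hmax ih hT
    have hT' : ∀ Q ∈ T, Prime Q := fun Q hQ => hT Q (Finset.mem_insert_of_mem hQ)
    have hP : Prime P := hT P (Finset.mem_insert_self _ _)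
    obtain ⟨Δ⟩ := ih hT'
    exact distortion_insert T P hT' hP hPT hmax
      (hh T _ (by have := two_le_absNorm hP; omega) hT' hmax) hh0 Δ

lemma multiset_prod_dvd_pow {M : Type*} [CommMonoid M] (s : Multiset M) (d : M)
    (hs : ∀ x ∈ s, x ∣ d) : s.prod ∣ d ^ Multiset.card s := by
  induction s using Multiset.induction_on with
  | empty => simp
  | cons x s ih =>
    rw [Multiset.prod_cons, Multiset.card_cons, pow_succ']
    exact mul_dvd_mul (hs x (Multiset.mem_cons_self _ _))
      (ih fun y hy => hs y (Multiset.mem_cons_of_mem hy))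

end Conclusion

/-- A covering system with pairwise distinct distinguishable moduli has a modulus of norm at
most a constant depending only on `K`. -/
theorem minimum_modulus_number_field_distinct (K : Type*) [Field K] [NumberField K] :
    ∃ C : ℝ,
      ∀ (n : ℕ) (hn : 0 < n) (a : Fin n → 𝓞 K) (Idl : Fin n → Ideal (𝓞 K)),
        (∀ i : Fin n, Distinguishable (Idl i)) →
        Function.Injective Idl →
        (∀ x : 𝓞 K, ∃ i : Fin n, x - a i ∈ Idl i) →
        ∃ i : Fin n, (Ideal.absNorm (Idl i) : ℝ) ≤ C := by
  obtain ⟨C₁, hC₁, hprod⟩ := prod_primes_le (K := K)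
  obtain ⟨Y, hY⟩ := sum_primes_tail (K := K) (1 / (16 * C₁)) (by positivity)
  have hfin : {I : Ideal (𝓞 K) | Ideal.absNorm I ≤ Y}.Finite := Ideal.finite_setOfPred_absNorm_le Y
  set B : ℕ := hfin.toFinset.card with hB
  refine ⟨(4 * 8 ^ B) ^ 2, ?_⟩
  intro n _ a Idl hdist hinj hcov
  by_contra hcon
  push Not at hcon
  have hne : ∀ i, Idl i ≠ 0 := fun i => (hdist i).1
  -- As the moduli are distinct, the residues are a function of the modulus.
  set a' : Ideal (𝓞 K) → 𝓞 K := Function.extend Idl a 0 with ha'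
  have haa : ∀ i, a' (Idl i) = a i := fun i => hinj.extend_apply a 0 i
  set T : Finset (Ideal (𝓞 K)) := Finset.univ.biUnion fun i =>
    (UniqueFactorizationMonoid.normalizedFactors (Idl i)).toFinset with hTdef
  set γ : ℕ := Finset.univ.sup fun i =>
    Multiset.card (UniqueFactorizationMonoid.normalizedFactors (Idl i)) with hγ
  have hT : ∀ P ∈ T, Prime P := by
    intro P hP
    obtain ⟨i, _, hi⟩ := Finset.mem_biUnion.1 hP
    exact UniqueFactorizationMonoid.prime_of_normalized_factor P (Multiset.mem_toFinset.1 hi)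
  -- `γ` is at least the exponent of every prime in every modulus.
  have hdvd : ∀ i, Idl i ∣ (∏ P ∈ T, P) ^ γ := by
    intro i
    have h1 : (UniqueFactorizationMonoid.normalizedFactors (Idl i)).prod = Idl i :=
      associated_iff_eq.1 (UniqueFactorizationMonoid.prod_normalizedFactors (hne i))
    have h2 := multiset_prod_dvd_pow (UniqueFactorizationMonoid.normalizedFactors (Idl i))
      (∏ P ∈ T, P) (fun P hP => Finset.dvd_prod_of_mem (fun P => P)
        (Finset.mem_biUnion.2 ⟨i, Finset.mem_univ _, Multiset.mem_toFinset.2 hP⟩))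
    rw [h1] at h2
    exact h2.trans (pow_dvd_pow _ (Finset.le_sup (f := fun i =>
      Multiset.card (UniqueFactorizationMonoid.normalizedFactors (Idl i))) (Finset.mem_univ i)))
  set h : ℕ → ℝ := fun q => 4 * C₁ * ((q : ℝ) ^ (3 / 2 : ℝ))⁻¹ with hh
  obtain ⟨⟨X, w, r, D, hw0, hw1, hD, -, hsm, hro⟩⟩ := exists_distortion γ Y a' h
    (fun q => by positivity) (by
      intro T q hq hT hTq
      have hq0 : (0 : ℝ) < q := by exact_mod_cast hq
      refine (mul_le_mul_of_nonneg_right (hprod T q hq hT hTq) (by positivity)).trans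
        (le_of_eq ?_)
      have e : (q : ℝ) ^ 2 = (q : ℝ) ^ (1 / 2 : ℝ) * (q : ℝ) ^ (3 / 2 : ℝ) := by
        rw [← Real.rpow_add hq0, ← Real.rpow_natCast]
        norm_num
      rw [hh, div_pow, e]
      field_simp
      norm_num) T hT
  have hrough : ∑ x, w x * ind (∃ m ∈ D, ¬IsSmooth Y m ∧ r x - a' m ∈ m) ≤ 1 / 4 := by
    refine hro.trans ?_
    rw [hh, ← Finset.mul_sum]
    refine (mul_le_mul_of_nonneg_left (hY _ (fun P hP => hT P (Finset.mem_filter.1 hP).1)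
      (fun P hP => (Finset.mem_filter.1 hP).2)) (by positivity)).trans (le_of_eq ?_)
    field_simp
    norm_num
  have hsmooth : ∑ m ∈ D with IsSmooth Y m, ∑ x, w x * ind (m ∈ Set.range Idl ∧ r x - a' m ∈ m)
      ≤ 1 / 4 := by
    have hcard : (T.filter (fun P => Ideal.absNorm P ≤ Y)).card ≤ B :=
      Finset.card_le_card fun P hP => by
        rw [Set.Finite.mem_toFinset]
        exact (Finset.mem_filter.1 hP).2
    have h1 : (8 : ℝ) ^ (T.filter (fun P => Ideal.absNorm P ≤ Y)).card ≤ 8 ^ B :=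
      pow_le_pow_right₀ (by norm_num) hcard
    have h2 : ∑ m ∈ D with IsSmooth Y m,
          (∑ x, w x * ind (m ∈ Set.range Idl ∧ r x - a' m ∈ m)) * (4 * 8 ^ B) ≤ 8 ^ B := by
      refine le_trans (Finset.sum_le_sum fun m _ => ?_) ((hsm a').trans h1)
      by_cases hm : m ∈ Set.range Idl
      · obtain ⟨i, rfl⟩ := hm
        refine mul_le_mul (Finset.sum_le_sum fun x _ => mul_le_mul_of_nonneg_left
          (ind_mono And.right) (hw0 x)) (Real.le_sqrt_of_sq_le (hcon i).le) (by positivity)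
          (Finset.sum_nonneg fun x _ => mul_nonneg (hw0 x) (ind_nonneg _))
      · have : ∀ x, ind (m ∈ Set.range Idl ∧ r x - a' m ∈ m) = 0 := fun x =>
          ind_false fun h => hm h.1
        simp only [this, mul_zero, Finset.sum_const_zero, zero_mul]
        exact mul_nonneg (Finset.sum_nonneg fun x _ => mul_nonneg (hw0 x) (ind_nonneg _))
          (Real.sqrt_nonneg _)
    rw [← Finset.sum_mul] at h2
    have h3 : (0 : ℝ) < 8 ^ B := by positivity
    rw [← mul_assoc] at h2
    have h4 := (mul_le_iff_le_one_left h3).1 h2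
    linarith
  -- Every sample point `r x` is covered, so the two kinds of moduli account for the whole weight.
  have htotal : ∑ x, w x ≤ ∑ x, w x * ind (∃ m ∈ D, ¬IsSmooth Y m ∧ r x - a' m ∈ m)
      + ∑ m ∈ D with IsSmooth Y m, ∑ x, w x * ind (m ∈ Set.range Idl ∧ r x - a' m ∈ m) := by
    rw [Finset.sum_comm, ← Finset.sum_add_distrib]
    refine Finset.sum_le_sum fun x _ => ?_
    rw [← Finset.mul_sum, ← mul_add]
    refine le_mul_of_one_le_right (hw0 x) ?_
    obtain ⟨i, hi⟩ := hcov (r x)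
    rw [← haa i] at hi
    have hiD : Idl i ∈ D := (hD _).2 (hdvd i)
    have hnn : 0 ≤ ∑ m ∈ D with IsSmooth Y m, ind (m ∈ Set.range Idl ∧ r x - a' m ∈ m) :=
      Finset.sum_nonneg fun _ _ => ind_nonneg _
    by_cases hs : IsSmooth Y (Idl i)
    · have h1 := Finset.single_le_sum (s := D.filter (IsSmooth Y))
        (f := fun m => ind (m ∈ Set.range Idl ∧ r x - a' m ∈ m))
        (fun _ _ => ind_nonneg _) (Finset.mem_filter.2 ⟨hiD, hs⟩)
      rw [ind_true ⟨⟨i, rfl⟩, hi⟩] at h1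
      linarith [ind_nonneg (∃ m ∈ D, ¬IsSmooth Y m ∧ r x - a' m ∈ m)]
    · rw [ind_true ⟨Idl i, hiD, hs, hi⟩]
      linarith
  linarith
end

section
/- Assume the general distortion setup. Suppose in addition that B_j is π_j-measurable for every 1 ≤ j ≤ J, and that Σ_{j=1}^J min{ M_j^{(1)}, M_j^{(2)}/(4δ_j(1−δ_j)) } < 1, where for indices j with δ_j = 0 the second term in the minimum is interpreted as +∞ (so the minimum equals M_j^{(1)}). Then P_J(B_1 ∪ ⋯ ∪ B_J) < 1. -/
open scoped Classical

/-!
A single distortion step replaces a weight `p`, constant on the fibres of `π (j - 1)`, by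
`q = g + 1_B h` with `g` (`stepOff`) and `g + h` (`stepOn`) constant on these fibres and
`g + α h = p`. Averaging over fibres (`sum_mem_eq_sum_density`) lets `1_B` be exchanged for its
fibre density `α`, so `q` has the same integral as `p` against every fibre-constant
function (`step_integral`), and
`q(B) = ∑ α (g + h) = E_p[max(α - δ, 0)] / (1 - δ)`. This is at most the first moment and, by
`4 δ (α - δ) ≤ α ^ 2`, at most the second moment over `4 δ (1 - δ)` (`step_bound`).

Since `B j` is `π j`-measurable, its mass does not change after step `j`, so
`P J (B j) = P j (B j)`. The union bound for the nonnegative weight `P J` then concludes.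
-/

/-- For a fibre-constant weight `f`, the mass of `B` is the integral of the fibre density of `B`. -/
lemma sum_mem_eq_sum_density {S T : Type*} [Fintype S] (ρ : S → T) (B : Finset S) (a : S → ℝ)
    (ha : ∀ x, a x = (((Finset.univ.filter fun x' => ρ x' = ρ x) ∩ B).card : ℝ) /
      ((Finset.univ.filter fun x' => ρ x' = ρ x).card : ℝ))
    (f : S → ℝ) (hf : ∀ x x', ρ x = ρ x' → f x = f x') :
    ∑ x, (if x ∈ B then f x else 0) = ∑ x, a x * f x := by
  set c : S → ℝ := fun x => ((Finset.univ.filter fun x' => ρ x' = ρ x).card : ℝ) with hc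
  have hcpos : ∀ x, 0 < c x := fun x => by
    simp only [hc, Nat.cast_pos]
    exact Finset.card_pos.mpr ⟨x, by simp⟩
  have hcc : ∀ x x', ρ x = ρ x' → c x = c x' := fun x x' h => by simp only [hc, h]
  -- Both sides equal the sum of `f x / c x` over pairs `x`, `y ∈ B` in the same fibre.
  have h1 : ∀ x, a x * f x = ∑ y, if ρ y = ρ x ∧ y ∈ B then f x / c x else 0 := fun x => by
    rw [← Finset.sum_filter, Finset.sum_const, nsmul_eq_mul, ha x]
    have : (Finset.univ.filter fun x' => ρ x' = ρ x) ∩ B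
        = Finset.univ.filter fun y => ρ y = ρ x ∧ y ∈ B := by
      ext y; simp
    rw [this]
    ring
  have h2 : ∀ y, (if y ∈ B then f y else 0)
      = ∑ x, if ρ y = ρ x ∧ y ∈ B then f x / c x else 0 := fun y => by
    by_cases hy : y ∈ B
    · have : ∀ x, (if ρ y = ρ x ∧ y ∈ B then f x / c x else 0)
          = if ρ x = ρ y then f y / c y else 0 := fun x => by
        by_cases h : ρ x = ρ y
        · simp [h, hy, hf x y h, hcc x y h]
        · simp [h, Ne.symm h]
      rw [Finset.sum_congr rfl fun x _ => this x, if_pos hy]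
      rw [← Finset.sum_filter, Finset.sum_const, nsmul_eq_mul]
      have := (hcpos y).ne'
      change f y = c y * (f y / c y)
      field_simp
    · simp [hy]
  simp only [h1, h2]
  exact Finset.sum_comm

/-- The value of the distorted weight off `B`; it depends on `x` only through `a x` and `p x`, hence
is fibre-constant when these are. -/
noncomputable def stepOff {S : Type*} (a : S → ℝ) (d : ℝ) (p : S → ℝ) (x : S) : ℝ :=
  if a x < d then p x / (1 - a x) else if a x = 0 then p x else p x / (1 - d)

/-- The value of the distorted weight on `B`; like `stepOff`, it depends on `x` only through `a x`
and `p x`. Its value at density `0` and `d = 0` is immaterial, as the fibre then misses `B`. -/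
noncomputable def stepOn {S : Type*} (a : S → ℝ) (d : ℝ) (p : S → ℝ) (x : S) : ℝ :=
  if a x < d then 0 else if a x = 0 then p x else p x * (a x - d) / (a x * (1 - d))

lemma density_congr {S T : Type*} [Fintype S] (ρ : S → T) (B : Finset S) (a : S → ℝ)
    (ha : ∀ x, a x = (((Finset.univ.filter fun x' => ρ x' = ρ x) ∩ B).card : ℝ) /
      ((Finset.univ.filter fun x' => ρ x' = ρ x).card : ℝ))
    (x x' : S) (h : ρ x = ρ x') : a x = a x' := by
  rw [ha, ha, h]

lemma density_nonneg {S T : Type*} [Fintype S] (ρ : S → T) (B : Finset S) (a : S → ℝ)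
    (ha : ∀ x, a x = (((Finset.univ.filter fun x' => ρ x' = ρ x) ∩ B).card : ℝ) /
      ((Finset.univ.filter fun x' => ρ x' = ρ x).card : ℝ)) (x : S) : 0 ≤ a x := by
  rw [ha]; positivity

lemma step_eq {S : Type*} (B : Finset S) (a : S → ℝ)
    (d : ℝ) (hd1 : d ≤ 1 / 2) (p q : S → ℝ)
    (hq : ∀ x, q x = if a x < d then (if x ∈ B then 0 else p x / (1 - a x))
      else if a x = 0 then p x
      else p x * (a x - (if x ∈ B then d else 0)) / (a x * (1 - d)))
    (x : S) : q x = if x ∈ B then stepOn a d p x else stepOff a d p x := by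
  have hd : (1 - d) ≠ 0 := by linarith
  rw [hq, stepOn, stepOff]
  by_cases h1 : a x < d
  · simp [h1]
  · by_cases h2 : a x = 0
    · simp only [if_neg h1, if_pos h2, ite_self]
    · by_cases h3 : x ∈ B
      · simp [h1, h2, h3]
      · simp only [h1, h2, h3, if_false, sub_zero]
        field_simp

lemma step_nonneg {S T : Type*} [Fintype S] (ρ : S → T) (B : Finset S) (a : S → ℝ)
    (ha : ∀ x, a x = (((Finset.univ.filter fun x' => ρ x' = ρ x) ∩ B).card : ℝ) /
      ((Finset.univ.filter fun x' => ρ x' = ρ x).card : ℝ))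
    (d : ℝ) (hd1 : d ≤ 1 / 2) (p q : S → ℝ)
    (hq : ∀ x, q x = if a x < d then (if x ∈ B then 0 else p x / (1 - a x))
      else if a x = 0 then p x
      else p x * (a x - (if x ∈ B then d else 0)) / (a x * (1 - d)))
    (hp : ∀ x, 0 ≤ p x) (x : S) : 0 ≤ q x := by
  have h0 := density_nonneg ρ B a ha x
  have hpx := hp x
  rw [step_eq B a d hd1 p q hq, stepOn, stepOff]
  split_ifs with _ h1 _ h1
  · exact le_rfl
  · exact hpx
  · exact div_nonneg (mul_nonneg hpx (by linarith)) (mul_nonneg h0 (by linarith))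
  · exact div_nonneg hpx (by linarith)
  · exact hpx
  · exact div_nonneg hpx (by linarith)

/-- A distortion step moves mass only within the fibres of `ρ`. -/
lemma step_integral {S T : Type*} [Fintype S] (ρ : S → T) (B : Finset S) (a : S → ℝ)
    (ha : ∀ x, a x = (((Finset.univ.filter fun x' => ρ x' = ρ x) ∩ B).card : ℝ) /
      ((Finset.univ.filter fun x' => ρ x' = ρ x).card : ℝ))
    (d : ℝ) (hd1 : d ≤ 1 / 2) (p q : S → ℝ)
    (hq : ∀ x, q x = if a x < d then (if x ∈ B then 0 else p x / (1 - a x))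
      else if a x = 0 then p x
      else p x * (a x - (if x ∈ B then d else 0)) / (a x * (1 - d)))
    (hp : ∀ x x', ρ x = ρ x' → p x = p x')
    (φ : S → ℝ) (hφ : ∀ x x', ρ x = ρ x' → φ x = φ x') :
    ∑ x, φ x * q x = ∑ x, φ x * p x := by
  have key := sum_mem_eq_sum_density ρ B a ha
    (fun x => φ x * (stepOn a d p x - stepOff a d p x)) (fun x x' h => by
      simp only [stepOn, stepOff, hφ x x' h, hp x x' h, density_congr ρ B a ha x x' h])
  have h1 : ∀ x, φ x * q x = φ x * stepOff a d p x +
      (if x ∈ B then φ x * (stepOn a d p x - stepOff a d p x) else 0) := fun x => by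
    rw [step_eq B a d hd1 p q hq]
    split_ifs <;> ring
  simp only [h1]
  rw [Finset.sum_add_distrib, key, ← Finset.sum_add_distrib]
  refine Finset.sum_congr rfl fun x _ => ?_
  have hd : (1 - d) ≠ 0 := by linarith
  rw [stepOn, stepOff]
  split_ifs with h h'
  · have : 1 - a x ≠ 0 := by linarith
    field_simp
    ring
  · simp
  · field_simp
    ring

/-- The mass of `B` after the step is `∑ max(a - d, 0) p / (1 - d)`, which both moments dominate. -/
lemma step_bound {S T : Type*} [Fintype S] (ρ : S → T) (B : Finset S) (a : S → ℝ)
    (ha : ∀ x, a x = (((Finset.univ.filter fun x' => ρ x' = ρ x) ∩ B).card : ℝ) /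
      ((Finset.univ.filter fun x' => ρ x' = ρ x).card : ℝ))
    (d : ℝ) (hd0 : 0 ≤ d) (hd1 : d ≤ 1 / 2) (p q : S → ℝ)
    (hq : ∀ x, q x = if a x < d then (if x ∈ B then 0 else p x / (1 - a x))
      else if a x = 0 then p x
      else p x * (a x - (if x ∈ B then d else 0)) / (a x * (1 - d)))
    (hp0 : ∀ x, 0 ≤ p x) (hp : ∀ x x', ρ x = ρ x' → p x = p x') :
    ∑ x ∈ B, q x ≤ if d = 0 then ∑ x, a x * p x
      else min (∑ x, a x * p x) ((∑ x, (a x) ^ 2 * p x) / (4 * d * (1 - d))) := by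
  have hd : 0 < 1 - d := by linarith
  have hB : ∑ x ∈ B, q x = ∑ x, a x * stepOn a d p x := by
    rw [← sum_mem_eq_sum_density ρ B a ha (stepOn a d p) (fun x x' h => by
      simp only [stepOn, hp x x' h, density_congr ρ B a ha x x' h])]
    rw [← Finset.sum_filter, Finset.filter_univ_mem]
    refine Finset.sum_congr rfl fun x hx => ?_
    rw [step_eq B a d hd1 p q hq, if_pos hx]
  have hle1 : ∀ x, a x ≤ 1 := fun x => by
    rw [ha]
    refine div_le_one_of_le₀ ?_ (by positivity)
    exact_mod_cast Finset.card_le_card Finset.inter_subset_left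
  have hM1 : ∑ x ∈ B, q x ≤ ∑ x, a x * p x := by
    rw [hB]
    refine Finset.sum_le_sum fun x _ => mul_le_mul_of_nonneg_left ?_ (density_nonneg ρ B a ha x)
    rw [stepOn]
    split_ifs with h h'
    · exact hp0 x
    · exact le_rfl
    · have hpos : 0 < a x := lt_of_le_of_ne (density_nonneg ρ B a ha x) (Ne.symm h')
      rw [div_le_iff₀ (mul_pos hpos hd)]
      refine mul_le_mul_of_nonneg_left ?_ (hp0 x)
      nlinarith [hle1 x]
  split_ifs with hd2
  · exact hM1
  · refine le_min hM1 ?_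
    have hdpos : 0 < d := lt_of_le_of_ne hd0 (Ne.symm hd2)
    rw [hB, Finset.sum_div]
    refine Finset.sum_le_sum fun x _ => ?_
    have hpx := hp0 x
    rw [stepOn]
    split_ifs with h h'
    · rw [mul_zero]; positivity
    · simp [h']
    · rw [← mul_div_assoc, mul_left_comm, mul_div_assoc, mul_div_mul_left _ _ h',
        mul_comm _ (p x), mul_div_assoc]
      refine mul_le_mul_of_nonneg_left ?_ hpx
      rw [div_le_div_iff₀ hd (by positivity)]
      -- The defect is `(a x - 2 d) ^ 2 (1 - d)`.
      nlinarith [mul_nonneg (sq_nonneg (a x - 2 * d)) hd.le]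

lemma sum_biUnion_le_sum {S : Type*} (s : Finset ℕ) (B : ℕ → Finset S) (f : S → ℝ)
    (hf : ∀ x, 0 ≤ f x) : ∑ x ∈ s.biUnion B, f x ≤ ∑ j ∈ s, ∑ x ∈ B j, f x := by
  induction s using Finset.induction_on with
  | empty => simp
  | insert j s hj ih =>
    rw [Finset.biUnion_insert, Finset.sum_insert hj]
    have h1 := Finset.sum_union_inter (s₁ := B j) (s₂ := s.biUnion B) (f := f)
    have h2 : 0 ≤ ∑ x ∈ B j ∩ s.biUnion B, f x := Finset.sum_nonneg fun x _ => hf x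
    linarith

/-- The distortion method for an inverse system. -/
theorem distortion_method
    {S : Type*} [Fintype S] [Nonempty S]
    (J : ℕ) (hJ : 1 ≤ J)
    (T : ℕ → Type*) (π : (j : ℕ) → S → T j)
    (hinv : ∀ j ∈ Finset.Icc 1 J, ∀ x x' : S, π j x = π j x' → π (j - 1) x = π (j - 1) x')
    (B : ℕ → Finset S)
    (δ : ℕ → ℝ) (hδ : ∀ j ∈ Finset.Icc 1 J, δ j ∈ Set.Icc (0 : ℝ) (1 / 2))
    (F : ℕ → S → Finset S)
    (hF : ∀ (j : ℕ) (x : S), F j x = Finset.univ.filter fun x' => π j x' = π j x)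
    (α : ℕ → S → ℝ)
    (hα : ∀ j ∈ Finset.Icc 1 J, ∀ x : S,
      α j x = ((F (j - 1) x ∩ B j).card : ℝ) / ((F (j - 1) x).card : ℝ))
    (P : ℕ → S → ℝ)
    (hP0nonneg : ∀ x : S, 0 ≤ P 0 x) (hP0sum : ∑ x : S, P 0 x = 1)
    (hP0meas : ∀ x x' : S, π 0 x = π 0 x' → P 0 x = P 0 x')
    (hPrec : ∀ j ∈ Finset.Icc 1 J, ∀ x : S,
      P j x = if α j x < δ j then (if x ∈ B j then 0 else P (j - 1) x / (1 - α j x))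
        else if α j x = 0 then P (j - 1) x
        else P (j - 1) x * (α j x - (if x ∈ B j then δ j else 0)) / (α j x * (1 - δ j)))
    (hBmeas : ∀ j ∈ Finset.Icc 1 J, ∀ x ∈ B j, ∀ x' : S, π j x' = π j x → x' ∈ B j)
    (hsum : ∑ j ∈ Finset.Icc 1 J,
        (if δ j = 0 then ∑ x : S, α j x * P (j - 1) x
         else min (∑ x : S, α j x * P (j - 1) x)
           ((∑ x : S, (α j x) ^ 2 * P (j - 1) x) / (4 * δ j * (1 - δ j)))) < 1) :
    ∑ x ∈ (Finset.Icc 1 J).biUnion B, P J x < 1 := by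
  have haF : ∀ j ∈ Finset.Icc 1 J, ∀ x : S, α j x =
      (((Finset.univ.filter fun x' => π (j - 1) x' = π (j - 1) x) ∩ B j).card : ℝ) /
      ((Finset.univ.filter fun x' => π (j - 1) x' = π (j - 1) x).card : ℝ) := fun j hj x => by
    rw [hα j hj x, hF]
  have hP : ∀ k ≤ J, (∀ x, 0 ≤ P k x) ∧ ∀ x x', π k x = π k x' → P k x = P k x' := by
    intro k
    induction k with
    | zero => exact fun _ => ⟨hP0nonneg, hP0meas⟩
    | succ k ih =>
      intro hk
      have hj : k + 1 ∈ Finset.Icc 1 J := Finset.mem_Icc.mpr ⟨by omega, hk⟩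
      obtain ⟨ih0, ihm⟩ := ih (by omega)
      refine ⟨step_nonneg (π k) (B (k + 1)) (α (k + 1)) (haF _ hj) (δ (k + 1))
        (hδ _ hj).2 (P k) (P (k + 1)) (hPrec _ hj) ih0, fun x x' h => ?_⟩
      have hρ : π k x = π k x' := hinv _ hj x x' h
      have hB : x ∈ B (k + 1) ↔ x' ∈ B (k + 1) :=
        ⟨fun hx => hBmeas _ hj x hx x' h.symm, fun hx => hBmeas _ hj x' hx x h⟩
      have ha := density_congr (π k) (B (k + 1)) (α (k + 1)) (haF _ hj) x x' hρ
      rw [hPrec _ hj, hPrec _ hj, ha]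
      simp only [ihm x x' hρ, hB, Nat.add_sub_cancel]
  -- The mass of `B j` is unchanged by the steps after the `j`-th.
  have hmass : ∀ j ∈ Finset.Icc 1 J, ∀ k, j ≤ k → k ≤ J →
      (∀ x x', π k x = π k x' → (x ∈ B j ↔ x' ∈ B j)) ∧
        ∑ x ∈ B j, P k x = ∑ x ∈ B j, P j x := by
    intro j hj k hjk
    induction k, hjk using Nat.le_induction with
    | base =>
      exact fun _ => ⟨fun x x' h => ⟨fun hx => hBmeas _ hj x hx x' h.symm,
        fun hx => hBmeas _ hj x' hx x h⟩, rfl⟩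
    | succ k hjk ih =>
      intro hk
      have hk' : k + 1 ∈ Finset.Icc 1 J := Finset.mem_Icc.mpr ⟨by omega, hk⟩
      obtain ⟨ihm, ihs⟩ := ih (by omega)
      refine ⟨fun x x' h => ihm x x' (hinv _ hk' x x' h), ?_⟩
      rw [← ihs]
      have := step_integral (π k) (B (k + 1)) (α (k + 1)) (haF _ hk') (δ (k + 1))
        (hδ _ hk').2 (P k) (P (k + 1)) (hPrec _ hk') (hP k (by omega)).2
        (fun x => if x ∈ B j then 1 else 0) (fun x x' h => by simp only [ihm x x' h])
      simpa [← Finset.sum_filter] using this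
  refine lt_of_le_of_lt ?_ hsum
  calc ∑ x ∈ (Finset.Icc 1 J).biUnion B, P J x
      ≤ ∑ j ∈ Finset.Icc 1 J, ∑ x ∈ B j, P J x :=
        sum_biUnion_le_sum _ _ _ (hP J le_rfl).1
    _ ≤ _ := Finset.sum_le_sum fun j hj => by
        have hj' := Finset.mem_Icc.mp hj
        rw [(hmass j hj J hj'.2 le_rfl).2]
        exact step_bound (π (j - 1)) (B j) (α j) (haF _ hj) (δ j) (hδ _ hj).1
          (hδ _ hj).2 (P (j - 1)) (P j) (hPrec _ hj) (hP (j - 1) (by omega)).1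
          (hP (j - 1) (by omega)).2
end

section
/- Assume the number-field distortion setup. If Σ_{j=1}^J min{ M_j^{(1)}, M_j^{(2)}/(4δ_j(1−δ_j)) } < 1, where for indices j with δ_j = 0 the second term in the minimum is interpreted as +∞ (so the minimum equals M_j^{(1)}), then A does not cover O_K, i.e. ⋃_{i=1}^n (a_i + I_i) ≠ O_K. -/
/-!
The measures `P j` are built so that no mass crosses a fibre of `π_{j-1}`: a function that is
constant on these fibres has the same integral against `P (j-1)` and `P j`
(`distortion_step_integral`). Since every ideal `I_i` with `P_min(I_i) = p_j` divides `Q_j`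
(`dvd_partial_product`), the set `B j` is a union of fibres of `π_j`, so its mass is frozen from
time `j` on: `P_J(B j) = P_j(B j)`. On a fibre of `π_{j-1}` with `α = α_j` the conditional
`P_j`-mass of `B j` is `0` when `α < δ`, and `(α - δ)/(1 - δ)` otherwise; the latter is at most
`α` and at most `α² / (4δ(1 - δ))`, the second bound being `(α - 2δ)² ≥ 0`. Hence
`P_j(B j)` is at most the `j`-th term of the moment sum (`distortion_step_mass`), and by the
union bound the sets `B j` have total `P_J`-mass less than `1 = P_J(O_K / Q)`. A class outside all
of them exists (`exists_avoiding`), and any lift of it is uncovered, since `P_min(I_i)` is one of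
the `p_j` for every `i`.

Fibres are encoded by a relation `r` on a finite type; the argument up to `exists_avoiding` uses
nothing else about `O_K / Q`.
-/

set_option maxHeartbeats 1000000
set_option synthInstance.maxHeartbeats 1000000

open scoped Classical
open NumberField

/-! ### One distortion step on a finite set -/

/-- Summing a fibrewise constant weight over `B` equals integrating it against the fibrewise
density of `B`. -/
lemma sum_mem_eq_sum_density_s4 {X : Type*} [Fintype X] (r : X → X → Prop) (hr : Equivalence r)
    (B : Finset X) (F : X → Finset X) (hF : ∀ x y, y ∈ F x ↔ r x y)
    (α : X → ℝ) (hα : ∀ x, α x = ((F x ∩ B).card : ℝ) / ((F x).card : ℝ))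
    (w : X → ℝ) (hw : ∀ x y, r x y → w x = w y) :
    ∑ x, (if x ∈ B then w x else 0) = ∑ x, w x * α x := by
  have hFr : ∀ x y, r x y → F x = F y := by
    intro x y h
    ext z
    rw [hF, hF]
    exact ⟨fun h' => hr.trans (hr.symm h) h', fun h' => hr.trans h h'⟩
  have e : ∀ x, w x * α x = ∑ y, if r x y ∧ y ∈ B then w x / ((F x).card : ℝ) else 0 := by
    intro x
    rw [hα, ← Finset.sum_filter, Finset.sum_const, nsmul_eq_mul]
    have : Finset.univ.filter (fun y => r x y ∧ y ∈ B) = F x ∩ B := by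
      ext y; simp [hF]
    rw [this]
    ring
  rw [Finset.sum_congr rfl fun x _ => e x, Finset.sum_comm]
  refine Finset.sum_congr rfl fun y _ => ?_
  by_cases hy : y ∈ B
  · have e2 : ∀ x, (if r x y ∧ y ∈ B then w x / ((F x).card : ℝ) else 0)
        = if x ∈ F y then w y / ((F y).card : ℝ) else 0 := by
      intro x
      by_cases h : r x y
      · simp [h, hy, (hF y x).2 (hr.symm h), hw x y h, hFr x y h]
      · have : x ∉ F y := fun h' => h (hr.symm ((hF y x).1 h'))
        simp [h, this]
    rw [Finset.sum_congr rfl fun x _ => e2 x]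
    have hpos : ((F y).card : ℝ) ≠ 0 := by
      have : y ∈ F y := (hF y y).2 (hr.refl y)
      exact_mod_cast (Finset.card_pos.2 ⟨y, this⟩).ne'
    simp [hy]
    field_simp
  · simp [hy]

/-- The density obtained from `P` by one distortion step with removed set `B`, fibre densities
`α` and threshold `δ`. -/
noncomputable def distort {X : Type*} (B : Finset X) (α : X → ℝ) (δ : ℝ) (P : X → ℝ) (x : X) : ℝ :=
  if α x < δ then (if x ∈ B then 0 else P x / (1 - α x))
  else if α x = 0 then P x
  else P x * (α x - (if x ∈ B then δ else 0)) / (α x * (1 - δ))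

/-- The value of `distort` off `B`; it is constant on fibres. -/
noncomputable def distortOff {X : Type*} (α : X → ℝ) (δ : ℝ) (P : X → ℝ) (x : X) : ℝ :=
  if α x < δ then P x / (1 - α x) else if α x = 0 then P x else P x / (1 - δ)

/-- The amount by which the value of `distort` on `B` falls short of `distortOff`; it is constant
on fibres. -/
noncomputable def distortDrop {X : Type*} (α : X → ℝ) (δ : ℝ) (P : X → ℝ) (x : X) : ℝ :=
  if α x < δ then P x / (1 - α x) else if α x = 0 then 0 else P x * δ / (α x * (1 - δ))

lemma distort_eq {X : Type*} (B : Finset X) (α : X → ℝ) (δ : ℝ) (P : X → ℝ) (hδ : δ ≤ 1 / 2)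
    (x : X) : distort B α δ P x
      = distortOff α δ P x - (if x ∈ B then distortDrop α δ P x else 0) := by
  unfold distort distortOff distortDrop
  have h1 : 1 - δ ≠ 0 := by linarith
  split_ifs <;> first | (field_simp; done) | (field_simp; ring) | ring

lemma fibre_density_invariant {X : Type*} (r : X → X → Prop) (hr : Equivalence r)
    (B : Finset X) (F : X → Finset X) (hF : ∀ x y, y ∈ F x ↔ r x y)
    (α : X → ℝ) (hα : ∀ x, α x = ((F x ∩ B).card : ℝ) / ((F x).card : ℝ)) :
    ∀ x y, r x y → α x = α y := by
  intro x y h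
  have : F x = F y := by
    ext z
    rw [hF, hF]
    exact ⟨fun h' => hr.trans (hr.symm h) h', fun h' => hr.trans h h'⟩
  rw [hα, hα, this]

/-- A distortion step moves no mass between fibres: functions constant on fibres keep their
integral. -/
lemma distortion_step_integral {X : Type*} [Fintype X] (r : X → X → Prop) (hr : Equivalence r)
    (B : Finset X) (F : X → Finset X) (hF : ∀ x y, y ∈ F x ↔ r x y)
    (α : X → ℝ) (hα : ∀ x, α x = ((F x ∩ B).card : ℝ) / ((F x).card : ℝ))
    (δ : ℝ) (hδ : δ ≤ 1 / 2)
    (P : X → ℝ) (hP : ∀ x y, r x y → P x = P y)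
    (g : X → ℝ) (hg : ∀ x y, r x y → g x = g y) :
    ∑ x, g x * distort B α δ P x = ∑ x, g x * P x := by
  have hαr := fibre_density_invariant r hr B F hF α hα
  have key := sum_mem_eq_sum_density_s4 r hr B F hF α hα (fun x => g x * distortDrop α δ P x)
    (fun x y h => by simp only [distortDrop, hαr x y h, hP x y h, hg x y h])
  have e : ∀ x, g x * distort B α δ P x = g x * distortOff α δ P x
      - (if x ∈ B then g x * distortDrop α δ P x else 0) := by
    intro x
    rw [distort_eq B α δ P hδ]
    split_ifs <;> ring
  rw [Finset.sum_congr rfl fun x _ => e x, Finset.sum_sub_distrib, key, ← Finset.sum_sub_distrib]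
  refine Finset.sum_congr rfl fun x _ => ?_
  have h1 : 1 - δ ≠ 0 := by linarith
  unfold distortOff distortDrop
  split_ifs with h h'
  · have h2 : 1 - α x ≠ 0 := by linarith
    field_simp
  · ring
  · field_simp

lemma distort_nonneg {X : Type*} (B : Finset X) (α : X → ℝ) (h0 : ∀ x, 0 ≤ α x) (δ : ℝ)
    (hδ : δ ≤ 1 / 2) (P : X → ℝ) (hP : ∀ x, 0 ≤ P x) (x : X) :
    0 ≤ distort B α δ P x := by
  unfold distort
  have hx := hP x
  have hx0 := h0 x
  split_ifs with h h2 h3 h4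
  · exact le_rfl
  · exact div_nonneg hx (by linarith)
  · exact hx
  · exact div_nonneg (mul_nonneg hx (by linarith)) (mul_nonneg hx0 (by linarith))
  · exact div_nonneg (mul_nonneg hx (by linarith)) (mul_nonneg hx0 (by linarith))

/-- After a distortion step the mass of `B` is at most the corresponding term of the moment sum. -/
lemma distortion_step_mass {X : Type*} [Fintype X] (r : X → X → Prop) (hr : Equivalence r)
    (B : Finset X) (F : X → Finset X) (hF : ∀ x y, y ∈ F x ↔ r x y)
    (α : X → ℝ) (hα : ∀ x, α x = ((F x ∩ B).card : ℝ) / ((F x).card : ℝ))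
    (δ : ℝ) (hδ0 : 0 ≤ δ) (hδ : δ ≤ 1 / 2)
    (P : X → ℝ) (hP : ∀ x y, r x y → P x = P y) (hP0 : ∀ x, 0 ≤ P x) :
    ∑ x, (if x ∈ B then 1 else 0) * distort B α δ P x ≤
      if δ = 0 then ∑ x, α x * P x
      else min (∑ x, α x * P x) ((∑ x, (α x) ^ 2 * P x) / (4 * δ * (1 - δ))) := by
  have hαr := fibre_density_invariant r hr B F hF α hα
  have h0 : ∀ x, 0 ≤ α x := fun x => by rw [hα]; positivity
  have h1 : ∀ x, α x ≤ 1 := fun x => by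
    rw [hα]
    exact div_le_one_of_le₀ (by exact_mod_cast Finset.card_le_card Finset.inter_subset_left)
      (by positivity)
  have key := sum_mem_eq_sum_density_s4 r hr B F hF α hα
    (fun x => distortOff α δ P x - distortDrop α δ P x)
    (fun x y h => by simp only [distortOff, distortDrop, hαr x y h, hP x y h])
  have e : ∀ x, (if x ∈ B then (1 : ℝ) else 0) * distort B α δ P x =
      if x ∈ B then distortOff α δ P x - distortDrop α δ P x else 0 := by
    intro x
    rw [distort_eq B α δ P hδ]
    split_ifs <;> ring
  rw [Finset.sum_congr rfl fun x _ => e x, key]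
  have hδ1 : 0 < 1 - δ := by linarith
  have val : ∀ x, (distortOff α δ P x - distortDrop α δ P x) * α x = 0 ∨
      (distortOff α δ P x - distortDrop α δ P x) * α x = P x * ((α x - δ) / (1 - δ)) := by
    intro x
    unfold distortOff distortDrop
    split_ifs with h h'
    · left; ring
    · left; rw [h']; ring
    · right; field_simp
  have b1 : ∑ x, (distortOff α δ P x - distortDrop α δ P x) * α x ≤ ∑ x, α x * P x := by
    refine Finset.sum_le_sum fun x _ => ?_
    rcases val x with h | h <;> rw [h]
    · exact mul_nonneg (h0 x) (hP0 x)
    · rw [mul_comm]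
      refine mul_le_mul_of_nonneg_right ?_ (hP0 x)
      rw [div_le_iff₀ hδ1]
      nlinarith [h1 x, mul_le_mul_of_nonneg_right (h1 x) hδ0]
  split_ifs with hz
  · exact b1
  · have hpos : 0 < δ := lt_of_le_of_ne hδ0 (Ne.symm hz)
    refine le_min b1 ?_
    rw [Finset.sum_div]
    refine Finset.sum_le_sum fun x _ => ?_
    rcases val x with h | h <;> rw [h]
    · have := hP0 x
      positivity
    · rw [mul_comm, mul_div_right_comm]
      refine mul_le_mul_of_nonneg_right ?_ (hP0 x)
      rw [div_le_div_iff₀ hδ1 (by positivity)]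
      nlinarith [mul_nonneg hδ1.le (sq_nonneg (α x - 2 * δ))]

/-! ### Iterating the step -/

/-- The distortion method on a finite set `X` with relations `r 0, r 1, …` that get finer and sets
`B j` that are unions of `r j`-classes: if the moment sum is below `1`, some point avoids
all `B j`. -/
lemma exists_avoiding {X : Type*} [Fintype X] [Nonempty X] (J : ℕ) (r : ℕ → X → X → Prop)
    (hr : ∀ j, Equivalence (r j)) (hanti : ∀ j x y, r (j + 1) x y → r j x y)
    (B : ℕ → Finset X)
    (hB : ∀ j ∈ Finset.Icc 1 J, ∀ x y, r j x y → (x ∈ B j ↔ y ∈ B j))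
    (F : ℕ → X → Finset X) (hF : ∀ j x y, y ∈ F j x ↔ r j x y)
    (α : ℕ → X → ℝ)
    (hα : ∀ j ∈ Finset.Icc 1 J, ∀ x,
      α j x = ((F (j - 1) x ∩ B j).card : ℝ) / ((F (j - 1) x).card : ℝ))
    (δ : ℕ → ℝ) (hδ : ∀ j ∈ Finset.Icc 1 J, δ j ∈ Set.Icc (0 : ℝ) (1 / 2))
    (P : ℕ → X → ℝ) (hP0 : ∀ x, P 0 x = 1 / (Fintype.card X : ℝ))
    (hPrec : ∀ j ∈ Finset.Icc 1 J, ∀ x, P j x = distort (B j) (α j) (δ j) (P (j - 1)) x)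
    (hsum : ∑ j ∈ Finset.Icc 1 J,
        (if δ j = 0 then ∑ x, α j x * P (j - 1) x
         else min (∑ x, α j x * P (j - 1) x)
           ((∑ x, (α j x) ^ 2 * P (j - 1) x) / (4 * δ j * (1 - δ j)))) < 1) :
    ∃ x, ∀ j ∈ Finset.Icc 1 J, x ∉ B j := by
  have hmono : ∀ i j, i ≤ j → ∀ x y, r j x y → r i x y := by
    intro i j h
    induction j, h using Nat.le_induction with
    | base => exact fun x y h => h
    | succ k _ ih => exact fun x y h => ih x y (hanti k x y h)
  have inv : ∀ j ≤ J, (∀ x y, r j x y → P j x = P j y) ∧ (∀ x, 0 ≤ P j x) := by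
    intro j
    induction j with
    | zero =>
      intro _
      refine ⟨fun x y _ => by rw [hP0, hP0], fun x => ?_⟩
      rw [hP0]
      positivity
    | succ k ih =>
      intro hk
      obtain ⟨ih1, ih2⟩ := ih (by omega)
      have hm : k + 1 ∈ Finset.Icc 1 J := by simp; omega
      have hα' := hα _ hm
      have hP' := hPrec _ hm
      simp only [Nat.add_sub_cancel] at hα' hP'
      constructor
      · intro x y h
        have hk' := hanti k x y h
        rw [hP', hP']
        simp only [distort, ih1 x y hk', hB _ hm x y h,
          fibre_density_invariant (r k) (hr k) (B (k + 1)) (F k) (hF k) _ hα' x y hk']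
      · intro x
        rw [hP']
        exact distort_nonneg _ _ (fun x => by rw [hα']; positivity) _ (hδ _ hm).2 _ ih2 x
  have integral : ∀ i j, i ≤ j → j ≤ J → ∀ g : X → ℝ, (∀ x y, r i x y → g x = g y) →
      ∑ x, g x * P j x = ∑ x, g x * P i x := by
    intro i j hij
    induction j, hij using Nat.le_induction with
    | base => exact fun _ _ _ => rfl
    | succ k hk ih =>
      intro hkJ g hg
      have hm : k + 1 ∈ Finset.Icc 1 J := by simp; omega
      have hα' := hα _ hm
      have hP' := hPrec _ hm
      simp only [Nat.add_sub_cancel] at hα' hP'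
      rw [← ih (by omega) g hg, Finset.sum_congr rfl fun x _ => by rw [hP' x]]
      exact distortion_step_integral (r k) (hr k) _ (F k) (hF k) _ hα' _ (hδ _ hm).2 _
        (inv k (by omega)).1 g fun x y h => hg x y (hmono i k hk x y h)
  have total : ∑ x, P J x = 1 := by
    have := integral 0 J (Nat.zero_le _) le_rfl (fun _ => 1) (fun _ _ _ => rfl)
    simp only [one_mul, hP0] at this
    rw [this]
    simp
  have mass : ∀ j ∈ Finset.Icc 1 J, ∑ x, (if x ∈ B j then 1 else 0) * P J x ≤
      if δ j = 0 then ∑ x, α j x * P (j - 1) x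
      else min (∑ x, α j x * P (j - 1) x)
        ((∑ x, (α j x) ^ 2 * P (j - 1) x) / (4 * δ j * (1 - δ j))) := by
    intro j hj
    have hj' := Finset.mem_Icc.1 hj
    rw [integral j J hj'.2 le_rfl (fun x => if x ∈ B j then 1 else 0)
      (fun x y h => by simp only [hB j hj x y h]),
      Finset.sum_congr rfl fun x _ => by rw [hPrec j hj x]]
    exact distortion_step_mass (r (j - 1)) (hr _) _ (F (j - 1)) (hF _) _ (hα j hj) _
      (hδ j hj).1 (hδ j hj).2 _ (inv (j - 1) (by omega)).1 (inv (j - 1) (by omega)).2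
  by_contra! hcon
  have hle : (1 : ℝ) ≤ ∑ j ∈ Finset.Icc 1 J, ∑ x, (if x ∈ B j then 1 else 0) * P J x := by
    rw [Finset.sum_comm]
    refine total.symm.le.trans ?_
    refine Finset.sum_le_sum fun x _ => ?_
    obtain ⟨j, hj, hx⟩ := hcon x
    have hnn := (inv J le_rfl).2 x
    calc P J x = (if x ∈ B j then 1 else 0) * P J x := by simp [hx]
      _ ≤ _ := Finset.single_le_sum
        (f := fun j => (if x ∈ B j then (1 : ℝ) else 0) * P J x)
        (fun k _ => by positivity) hj
  exact absurd (lt_of_le_of_lt (hle.trans (Finset.sum_le_sum mass)) hsum) (lt_irrefl _)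

/-! ### Ideals -/

/-- An ideal `I` dividing `∏ p_k ^ ν_k` whose largest prime is `p_j` divides the partial product up
to `j`: the later primes are at least as large as `p_j`, hence do not divide `I`. -/
lemma dvd_partial_product {K : Type*} [Field K] [NumberField K] (J : ℕ) (p : ℕ → Ideal (𝓞 K))
    (ν : ℕ → ℕ) (hmax : ∀ j ∈ Finset.Icc 1 J, (p j).IsMaximal)
    (hpinj : ∀ j ∈ Finset.Icc 1 J, ∀ j' ∈ Finset.Icc 1 J, p j = p j' → j = j')
    (hpmono : ∀ j ∈ Finset.Icc 1 J, ∀ j' ∈ Finset.Icc 1 J, j ≤ j' →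
      Ideal.absNorm (p j) ≤ Ideal.absNorm (p j'))
    (I : Ideal (𝓞 K)) (hI : I ∣ ∏ k ∈ Finset.Icc 1 J, p k ^ ν k)
    (j : ℕ) (hj : j ∈ Finset.Icc 1 J) (hIp : IsPmin I (p j)) :
    I ∣ ∏ k ∈ Finset.Icc 1 j, p k ^ ν k := by
  have hj' := Finset.mem_Icc.1 hj
  have hsub : Finset.Icc 1 j ⊆ Finset.Icc 1 J := Finset.Icc_subset_Icc_right hj'.2
  rw [← Finset.prod_sdiff hsub] at hI
  refine IsCoprime.dvd_of_dvd_mul_left ?_ hI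
  refine IsCoprime.prod_right fun k hk => IsCoprime.pow_right ?_
  rw [Finset.mem_sdiff, Finset.mem_Icc, Finset.mem_Icc] at hk
  have hkJ : k ∈ Finset.Icc 1 J := Finset.mem_Icc.2 hk.1
  have hmk := hmax k hkJ
  rw [Ideal.isCoprime_iff_sup_eq, sup_comm]
  refine hmk.out.2 _ (left_lt_sup.2 fun hle => ?_)
  have hlt := hIp.2.2 (p k) hmk.isPrime (Ideal.dvd_iff_le.2 hle)
    fun h => by have := hpinj k hkJ j hj h; omega
  exact absurd (hpmono j hj k hkJ (by omega)) (not_le.2 hlt)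

/-- The distortion method for number fields: if the moment sum is less than 1, the
collection does not cover the ring of integers. -/
theorem distortion_method_number_field
    {K : Type*} [Field K] [NumberField K]
    (n : ℕ) (hn : 0 < n)
    (a : Fin n → 𝓞 K) (Idl : Fin n → Ideal (𝓞 K))
    (hdist : ∀ i : Fin n, Distinguishable (Idl i))
    (hmono : ∀ i j : Fin n, i ≤ j → Ideal.absNorm (Idl i) ≤ Ideal.absNorm (Idl j))
    (s : ℕ)
    (hsle : ∀ I₀ : Ideal (𝓞 K), (Finset.univ.filter fun i : Fin n => Idl i = I₀).card ≤ s)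
    (hseq : ∃ I₀ : Ideal (𝓞 K), (Finset.univ.filter fun i : Fin n => Idl i = I₀).card = s)
    (Q : Ideal (𝓞 K)) (hQ : Q = ⨅ i : Fin n, Idl i)
    (J : ℕ) (p : ℕ → Ideal (𝓞 K)) (ν : ℕ → ℕ)
    (hp : ∀ j ∈ Finset.Icc 1 J, (p j).IsPrime)
    (hν : ∀ j ∈ Finset.Icc 1 J, 1 ≤ ν j)
    (hpinj : ∀ j ∈ Finset.Icc 1 J, ∀ j' ∈ Finset.Icc 1 J, p j = p j' → j = j')
    (hfact : Q = ∏ j ∈ Finset.Icc 1 J, p j ^ ν j)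
    (hpmono : ∀ j ∈ Finset.Icc 1 J, ∀ j' ∈ Finset.Icc 1 J, j ≤ j' →
      Ideal.absNorm (p j) ≤ Ideal.absNorm (p j'))
    (Qp : ℕ → Ideal (𝓞 K)) (hQp : ∀ j : ℕ, Qp j = ∏ i ∈ Finset.Icc 1 j, p i ^ ν i)
    [Fintype (𝓞 K ⧸ Q)]
    (B : ℕ → Finset (𝓞 K ⧸ Q))
    (hB : ∀ j ∈ Finset.Icc 1 J, B j = Finset.univ.filter fun x : 𝓞 K ⧸ Q =>
      ∃ i : Fin n, IsPmin (Idl i) (p j) ∧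
        x - Ideal.Quotient.mk Q (a i) ∈ (Idl i).map (Ideal.Quotient.mk Q))
    (F : ℕ → (𝓞 K ⧸ Q) → Finset (𝓞 K ⧸ Q))
    (hF : ∀ (j : ℕ) (x : 𝓞 K ⧸ Q),
      F j x = Finset.univ.filter fun x' : 𝓞 K ⧸ Q => x' - x ∈ (Qp j).map (Ideal.Quotient.mk Q))
    (α : ℕ → (𝓞 K ⧸ Q) → ℝ)
    (hα : ∀ j ∈ Finset.Icc 1 J, ∀ x : 𝓞 K ⧸ Q,
      α j x = ((F (j - 1) x ∩ B j).card : ℝ) / ((F (j - 1) x).card : ℝ))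
    (δ : ℕ → ℝ) (hδ : ∀ j ∈ Finset.Icc 1 J, δ j ∈ Set.Icc (0 : ℝ) (1 / 2))
    (P : ℕ → (𝓞 K ⧸ Q) → ℝ)
    (hP0 : ∀ x : 𝓞 K ⧸ Q, P 0 x = 1 / (Fintype.card (𝓞 K ⧸ Q) : ℝ))
    (hPrec : ∀ j ∈ Finset.Icc 1 J, ∀ x : 𝓞 K ⧸ Q,
      P j x = if α j x < δ j then (if x ∈ B j then 0 else P (j - 1) x / (1 - α j x))
        else if α j x = 0 then P (j - 1) x
        else P (j - 1) x * (α j x - (if x ∈ B j then δ j else 0)) / (α j x * (1 - δ j)))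
    (hsum : ∑ j ∈ Finset.Icc 1 J,
        (if δ j = 0 then ∑ x : 𝓞 K ⧸ Q, α j x * P (j - 1) x
         else min (∑ x : 𝓞 K ⧸ Q, α j x * P (j - 1) x)
           ((∑ x : 𝓞 K ⧸ Q, (α j x) ^ 2 * P (j - 1) x) / (4 * δ j * (1 - δ j)))) < 1) :
    ¬ (∀ x : 𝓞 K, ∃ i : Fin n, x - a i ∈ Idl i) := by
  have hQ0 : Q ≠ ⊥ := by
    have : Finite (𝓞 K ⧸ Q) := inferInstance
    exact fun h => (Ideal.absNorm_ne_zero_iff Q).2 this (by rw [h]; exact Ideal.absNorm_bot)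
  have hmax : ∀ j ∈ Finset.Icc 1 J, (p j).IsMaximal := by
    intro j hj
    refine (hp j hj).isMaximal fun h0 => hQ0 ?_
    rw [hfact]
    refine Finset.prod_eq_zero hj ?_
    have := hν j hj
    rw [h0]
    exact zero_pow (by omega)
  have hdvd : ∀ i, Idl i ∣ Q := fun i => Ideal.dvd_iff_le.2 (hQ ▸ iInf_le _ i)
  obtain ⟨x, hx⟩ := exists_avoiding J
    (fun j x y => y - x ∈ (Qp j).map (Ideal.Quotient.mk Q))
    (fun j => ⟨fun x => by simp, fun {x y} h => by simpa using neg_mem h,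
      fun {x y z} h h' => by simpa using add_mem h' h⟩)
    (fun j x y h => by
      refine Ideal.map_mono (Ideal.dvd_iff_le.1 ?_) h
      rw [hQp, hQp]
      exact Finset.prod_dvd_prod_of_subset _ _ _ (Finset.Icc_subset_Icc_right (Nat.le_succ j)))
    B
    (fun j hj x y h => by
      have hinc : ∀ i, IsPmin (Idl i) (p j) → y - x ∈ (Idl i).map (Ideal.Quotient.mk Q) := by
        intro i hi
        refine Ideal.map_mono (Ideal.dvd_iff_le.1 ?_) h
        rw [hQp]
        exact dvd_partial_product J p ν hmax hpinj hpmono _ (hfact ▸ hdvd i) j hj hi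
      rw [hB j hj]
      simp only [Finset.mem_filter, Finset.mem_univ, true_and]
      constructor
      · rintro ⟨i, hi, hm⟩
        exact ⟨i, hi, by simpa using add_mem (hinc i hi) hm⟩
      · rintro ⟨i, hi, hm⟩
        exact ⟨i, hi, by simpa using sub_mem hm (hinc i hi)⟩)
    F (fun j x y => by rw [hF]; simp) α hα δ hδ P hP0 hPrec hsum
  obtain ⟨z, rfl⟩ := Ideal.Quotient.mk_surjective x
  intro hcov
  obtain ⟨i, hi⟩ := hcov z
  obtain ⟨-, -, q, hq⟩ := hdist i
  -- The largest prime of `Idl i` divides `Q`, so it is one of the `p j`.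
  have hqQ : q ∣ ∏ j ∈ Finset.Icc 1 J, p j ^ ν j := hfact ▸ hq.2.1.trans (hdvd i)
  have hq0 : q ≠ ⊥ := fun h => hQ0 (by
    rw [hfact]; rw [h] at hqQ; exact zero_dvd_iff.1 hqQ)
  have hqp : Prime q := Ideal.prime_of_isPrime hq0 hq.1
  obtain ⟨j, hj, hjq⟩ := (hqp.dvd_finsetProd_iff _).1 hqQ
  have hqj : p j = q := (hmax j hj).eq_of_le hq.1.ne_top
    (Ideal.dvd_iff_le.1 (hqp.dvd_of_dvd_pow hjq))
  refine hx j hj ?_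
  rw [hB j hj, Finset.mem_filter]
  refine ⟨Finset.mem_univ _, i, hqj ▸ hq, ?_⟩
  rw [← map_sub]
  exact Ideal.mem_map_of_mem _ hi
end

section
/- Assume the number-field distortion setup. Then for every x ∈ O_K/Q and every 1 ≤ j ≤ J, α_j(x) ≤ Σ_{r=1}^{ν_j} Σ_{H | Q_{j−1}} Σ_{1 ≤ i ≤ n, I_i = H·p_j^r} 1_{x ⊆ a_i + I_i·? } / N(p_j)^r, where the middle sum is over ideals H of O_K dividing Q_{j−1}, the inner sum is over indices i with I_i = H·p_j^r, and the indicator 1_{x ⊆ a_i + H} equals 1 exactly when the coset x of Q is contained in the congruence class a_i + H; that is, α_j(x) ≤ Σ_{r=1}^{ν_j} Σ_{H | Q_{j−1}} Σ_{i : I_i = H p_j^r} 1_{x ⊆ a_i + H} / N(p_j)^r. -/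
/-!
Fix `j`, write `M = Q_{j-1}` and `P = p_j`. Every class contributing to `𝓑_j` has modulus
`I_i = H * P ^ r` with `1 ≤ r ≤ ν_j` and `H ∣ M`: the cofactor `H` prime to `P` only involves primes
of norm smaller than `N(P)`, and these precede `p_j` in the list (`exists_factor`).

If `x' ≡ x mod M` and `x' ≡ a_i mod I_i`, then `x ≡ a_i mod H`, because `M ⊆ H` and `I_i ⊆ H`; so
only indices with `x ⊆ a_i + H` meet the fibre of `x`. For these, two such `x'` differ by an element
of `M ∩ P ^ r = M * P ^ r`, so the class occupies a proportion at most `1 / N(P) ^ r` of the fibre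
(`card_fibre_inter_le`). The union bound over `i` gives the claim, once the sum over divisors `H` is
seen to be finite and each index `i` is assigned its term `(r, H)`.
-/

set_option maxHeartbeats 1000000
set_option synthInstance.maxHeartbeats 1000000

open scoped Classical
open NumberField

/-- The image in `𝓞 K ⧸ Q` of an ideal `A ⊇ Q` has `N(Q) / N(A)` elements. -/
lemma absNorm_mul_card_map {K : Type*} [Field K] [NumberField K] (Q A : Ideal (𝓞 K))
    [Fintype (𝓞 K ⧸ Q)] (hQA : Q ≤ A) :
    Ideal.absNorm A * (Finset.univ.filter fun y : 𝓞 K ⧸ Q =>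
      y ∈ A.map (Ideal.Quotient.mk Q)).card = Fintype.card (𝓞 K ⧸ Q) := by
  have h := Submodule.card_eq_card_quotient_mul_card (A.map (Ideal.Quotient.mk Q))
  have e := Nat.card_congr (DoubleQuot.quotQuotEquivQuotOfLE hQA).toEquiv
  have hN : Ideal.absNorm A = Nat.card (𝓞 K ⧸ A) := rfl
  have h2 : Nat.card (A.map (Ideal.Quotient.mk Q)) = (Finset.univ.filter fun y : 𝓞 K ⧸ Q =>
      y ∈ A.map (Ideal.Quotient.mk Q)).card := by
    rw [Nat.card_eq_fintype_card]
    exact Fintype.card_subtype _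
  rw [← h2, hN, ← e, ← Nat.card_eq_fintype_card, h]
  exact mul_comm _ _

/-- A class modulo `I ⊆ P ^ r` meets a class modulo `M`, with `M` coprime to `P ^ r`, in at most
a proportion `1 / N(P) ^ r` of the latter: the intersection lies in one class modulo `M * P ^ r`. -/
lemma card_fibre_inter_le {K : Type*} [Field K] [NumberField K] (Q M I P : Ideal (𝓞 K)) (r : ℕ)
    [Fintype (𝓞 K ⧸ Q)] (hM : M ≠ ⊥) (hQL : Q ≤ M * P ^ r) (hQI : Q ≤ I) (hI : I ≤ P ^ r)
    (hcop : IsCoprime M (P ^ r)) (x b : 𝓞 K ⧸ Q) :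
    Ideal.absNorm P ^ r * (Finset.univ.filter fun y : 𝓞 K ⧸ Q =>
      y - x ∈ M.map (Ideal.Quotient.mk Q) ∧ y - b ∈ I.map (Ideal.Quotient.mk Q)).card ≤
    (Finset.univ.filter fun y : 𝓞 K ⧸ Q => y - x ∈ M.map (Ideal.Quotient.mk Q)).card := by
  have hQM : Q ≤ M := hQL.trans Ideal.mul_le_left
  have h1 := absNorm_mul_card_map Q M hQM
  have h2 := absNorm_mul_card_map Q (M * P ^ r) hQL
  rw [← h1, map_mul, map_pow, mul_assoc] at h2
  have hpos : 0 < Ideal.absNorm M :=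
    Nat.pos_of_ne_zero fun h => hM (Ideal.absNorm_eq_zero_iff.mp h)
  have h3 := Nat.eq_of_mul_eq_mul_left hpos h2
  have hfib : (Finset.univ.filter fun y : 𝓞 K ⧸ Q =>
        y - x ∈ M.map (Ideal.Quotient.mk Q)).card =
      (Finset.univ.filter fun y : 𝓞 K ⧸ Q => y ∈ M.map (Ideal.Quotient.mk Q)).card := by
    refine Finset.card_bij (fun y _ => y - x) ?_ ?_ ?_
    · intro y hy; simpa using hy
    · intro y _ z _ h; simpa using h
    · intro z hz; exact ⟨z + x, by simpa using hz, by simp⟩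
  rw [hfib, ← h3]
  refine Nat.mul_le_mul_left _ ?_
  rcases Finset.eq_empty_or_nonempty (Finset.univ.filter fun y : 𝓞 K ⧸ Q =>
      y - x ∈ M.map (Ideal.Quotient.mk Q) ∧ y - b ∈ I.map (Ideal.Quotient.mk Q)) with h0 | ⟨z, hz⟩
  · rw [h0]; simp
  · refine Finset.card_le_card_of_injOn (fun y => y - z) ?_ ?_
    · intro y hy
      simp only [Finset.coe_filter, Finset.mem_filter, Finset.mem_univ, true_and,
        Set.mem_ofPred_eq] at hy hz ⊢
      have e1 : y - z ∈ M.map (Ideal.Quotient.mk Q) := by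
        have := Ideal.sub_mem _ hy.1 hz.1
        rwa [sub_sub_sub_cancel_right] at this
      have e2 : y - z ∈ I.map (Ideal.Quotient.mk Q) := by
        have := Ideal.sub_mem _ hy.2 hz.2
        rwa [sub_sub_sub_cancel_right] at this
      obtain ⟨w, hw⟩ := Ideal.Quotient.mk_surjective (y - z)
      rw [← hw] at e1 e2 ⊢
      rw [Ideal.mem_quotient_iff_mem hQM] at e1
      rw [Ideal.mem_quotient_iff_mem hQI] at e2
      rw [Ideal.mem_quotient_iff_mem hQL, Ideal.mul_eq_inf_of_isCoprime hcop]
      exact ⟨e1, hI e2⟩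
    · intro y _ y' _ h
      simpa using h

lemma isCoprime_of_prime_not_dvd {K : Type*} [Field K] [NumberField K] {P H : Ideal (𝓞 K)}
    (hP : P.IsPrime) (hP0 : P ≠ ⊥) (h : ¬ P ∣ H) : IsCoprime P H := by
  have hmax := hP.isMaximal hP0
  rw [Ideal.isCoprime_iff_sup_eq]
  refine hmax.1.2 _ (lt_of_le_of_ne le_sup_left fun he => h (Ideal.dvd_iff_le.mpr ?_))
  exact he ▸ le_sup_right

/-- An ideal `I` divisible by `P` and dividing `M * P ^ v * T` has the form `H * P ^ r` with
`H ∣ M` and `1 ≤ r ≤ v`. The hypothesis `hT` encodes that the primes of `T` are too large to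
divide `I`. -/
lemma exists_factor {K : Type*} [Field K] [NumberField K] (I P M T : Ideal (𝓞 K)) (v : ℕ)
    (hP : P.IsPrime) (hP0 : P ≠ ⊥) (hI0 : I ≠ ⊥) (hPI : P ∣ I)
    (hMP : IsCoprime M P) (hTP : IsCoprime T P)
    (hT : ∀ H : Ideal (𝓞 K), H ∣ I → ¬ P ∣ H → IsCoprime H T)
    (hdvd : I ∣ M * P ^ v * T) :
    ∃ r ∈ Finset.Icc 1 v, ∃ H : Ideal (𝓞 K), H ∣ M ∧ I = H * P ^ r := by
  have hPp : Prime P := Ideal.prime_of_isPrime hP0 hP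
  obtain ⟨H, hH, hn⟩ :=
    (FiniteMultiplicity.of_prime_left hPp hI0).exists_eq_pow_mul_and_not_dvd
  set r := multiplicity P I
  have hHP : IsCoprime H P := (isCoprime_of_prime_not_dvd hP hP0 hn).symm
  have hHI : H ∣ I := hH ▸ dvd_mul_left _ _
  refine ⟨r, ?_, H, ?_, by rw [hH, mul_comm]⟩
  · rw [Finset.mem_Icc]
    constructor
    · by_contra hr
      have hr0 : r = 0 := by omega
      rw [hr0, pow_zero, one_mul] at hH
      exact hn (hH ▸ hPI)
    · have h1 : P ^ r ∣ M * P ^ v * T := (hH ▸ dvd_mul_right _ _ : P ^ r ∣ I).trans hdvd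
      have h2 := (hTP.symm.pow_left (m := r)).dvd_of_dvd_mul_right h1
      have h3 := (hMP.symm.pow_left (m := r)).dvd_of_dvd_mul_left h2
      exact (pow_dvd_pow_iff hPp.ne_zero hPp.not_isUnit).mp h3
  · have h2 := (hT H hHI hn).dvd_of_dvd_mul_right (hHI.trans hdvd)
    exact (hHP.pow_right).dvd_of_dvd_mul_right h2

/-- Upper bound for `α_j(x)` in terms of the congruence classes of the covering collection. -/
theorem alpha_upper_bound
    {K : Type*} [Field K] [NumberField K]
    (n : ℕ) (hn : 0 < n)
    (a : Fin n → 𝓞 K) (Idl : Fin n → Ideal (𝓞 K))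
    (hdist : ∀ i : Fin n, Distinguishable (Idl i))
    (hmono : ∀ i j : Fin n, i ≤ j → Ideal.absNorm (Idl i) ≤ Ideal.absNorm (Idl j))
    (s : ℕ)
    (hsle : ∀ I₀ : Ideal (𝓞 K), (Finset.univ.filter fun i : Fin n => Idl i = I₀).card ≤ s)
    (hseq : ∃ I₀ : Ideal (𝓞 K), (Finset.univ.filter fun i : Fin n => Idl i = I₀).card = s)
    (Q : Ideal (𝓞 K)) (hQ : Q = ⨅ i : Fin n, Idl i)
    (J : ℕ) (p : ℕ → Ideal (𝓞 K)) (ν : ℕ → ℕ)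
    (hp : ∀ j ∈ Finset.Icc 1 J, (p j).IsPrime)
    (hν : ∀ j ∈ Finset.Icc 1 J, 1 ≤ ν j)
    (hpinj : ∀ j ∈ Finset.Icc 1 J, ∀ j' ∈ Finset.Icc 1 J, p j = p j' → j = j')
    (hfact : Q = ∏ j ∈ Finset.Icc 1 J, p j ^ ν j)
    (hpmono : ∀ j ∈ Finset.Icc 1 J, ∀ j' ∈ Finset.Icc 1 J, j ≤ j' →
      Ideal.absNorm (p j) ≤ Ideal.absNorm (p j'))
    (Qp : ℕ → Ideal (𝓞 K)) (hQp : ∀ j : ℕ, Qp j = ∏ i ∈ Finset.Icc 1 j, p i ^ ν i)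
    [Fintype (𝓞 K ⧸ Q)]
    (B : ℕ → Finset (𝓞 K ⧸ Q))
    (hB : ∀ j ∈ Finset.Icc 1 J, B j = Finset.univ.filter fun x : 𝓞 K ⧸ Q =>
      ∃ i : Fin n, IsPmin (Idl i) (p j) ∧
        x - Ideal.Quotient.mk Q (a i) ∈ (Idl i).map (Ideal.Quotient.mk Q))
    (F : ℕ → (𝓞 K ⧸ Q) → Finset (𝓞 K ⧸ Q))
    (hF : ∀ (j : ℕ) (x : 𝓞 K ⧸ Q),
      F j x = Finset.univ.filter fun x' : 𝓞 K ⧸ Q => x' - x ∈ (Qp j).map (Ideal.Quotient.mk Q))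
    (α : ℕ → (𝓞 K ⧸ Q) → ℝ)
    (hα : ∀ j ∈ Finset.Icc 1 J, ∀ x : 𝓞 K ⧸ Q,
      α j x = ((F (j - 1) x ∩ B j).card : ℝ) / ((F (j - 1) x).card : ℝ))
    :
    ∀ j ∈ Finset.Icc 1 J, ∀ x : 𝓞 K ⧸ Q,
      α j x ≤ ∑ r ∈ Finset.Icc 1 (ν j), ∑' H : Ideal (𝓞 K),
        (if H ∣ Qp (j - 1) then
          ∑ i : Fin n,
            (if Idl i = H * p j ^ r ∧
                x - Ideal.Quotient.mk Q (a i) ∈ H.map (Ideal.Quotient.mk Q)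
             then 1 / (Ideal.absNorm (p j) : ℝ) ^ r else 0)
         else 0) := by
  intro j hj x
  obtain ⟨hj1, hjJ⟩ := Finset.mem_Icc.mp hj
  -- `Q` is nonzero because `𝓞 K` is infinite while `𝓞 K ⧸ Q` is finite.
  have hQ0 : Q ≠ ⊥ := by
    rintro rfl
    have : Finite (𝓞 K) := Finite.of_equiv _ (RingEquiv.quotientBot (𝓞 K)).toEquiv
    exact not_finite (𝓞 K)
  have hp0 : ∀ k ∈ Finset.Icc 1 J, p k ≠ ⊥ := by
    intro k hk h
    apply hQ0
    rw [hfact]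
    refine Finset.prod_eq_zero hk ?_
    rw [h]
    exact zero_pow (by have := hν k hk; omega)
  have hcopne : ∀ k ∈ Finset.Icc 1 J, k ≠ j → IsCoprime (p k) (p j) := by
    intro k hk hne
    refine isCoprime_of_prime_not_dvd (hp k hk) (hp0 k hk) fun hd => hne (hpinj k hk j hj ?_)
    exact (((hp j hj).isMaximal (hp0 j hj)).eq_of_le (hp k hk).ne_top (Ideal.dvd_iff_le.mp hd)).symm
  set M := Qp (j - 1) with hM
  set P := p j with hP
  set T := ∏ k ∈ Finset.Icc (j + 1) J, p k ^ ν k with hT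
  have hQeq : Q = M * P ^ ν j * T := by
    have e1 : Finset.Icc 1 J = Finset.Ioc 0 J := rfl
    have e2 : Finset.Icc 1 (j - 1) = Finset.Ioc 0 (j - 1) := rfl
    have e3 : Finset.Icc (j + 1) J = Finset.Ioc j J := by ext; simp
    have e4 : Finset.Ioc (j - 1) j = {j} := by ext; simp; omega
    rw [hfact, hM, hQp, hT, e1, e2, e3, ← Finset.prod_Ioc_consecutive _ (Nat.zero_le j) hjJ,
      ← Finset.prod_Ioc_consecutive _ (Nat.zero_le (j - 1)) (Nat.sub_le j 1), e4,
      Finset.prod_singleton]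
  have hM0 : M ≠ ⊥ := by
    intro h
    apply hQ0
    rw [hQeq, h, ← Ideal.zero_eq_bot, zero_mul, zero_mul]
  have hMP : IsCoprime M P := by
    rw [hM, hQp]
    refine IsCoprime.prod_left fun k hk => IsCoprime.pow_left ?_
    rw [Finset.mem_Icc] at hk
    exact hcopne k (Finset.mem_Icc.mpr ⟨hk.1, by omega⟩) (by omega)
  have hTP : IsCoprime T P := by
    refine IsCoprime.prod_left fun k hk => IsCoprime.pow_left ?_
    rw [Finset.mem_Icc] at hk
    exact hcopne k (Finset.mem_Icc.mpr ⟨by omega, hk.2⟩) (by omega)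
  have hQI : ∀ i, Q ≤ Idl i := fun i => hQ ▸ iInf_le _ i
  have hfac : ∀ i, IsPmin (Idl i) P →
      ∃ r ∈ Finset.Icc 1 (ν j), ∃ H : Ideal (𝓞 K), H ∣ M ∧ Idl i = H * P ^ r := by
    intro i hi
    refine exists_factor (Idl i) P M T (ν j) (hp j hj) (hp0 j hj) (hdist i).1 hi.2.1 hMP hTP ?_
      (hQeq ▸ Ideal.dvd_iff_le.mpr (hQI i))
    intro H hHI hn
    refine IsCoprime.prod_right fun k hk => IsCoprime.pow_right ?_
    rw [Finset.mem_Icc] at hk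
    have hk' : k ∈ Finset.Icc 1 J := Finset.mem_Icc.mpr ⟨by omega, hk.2⟩
    refine (isCoprime_of_prime_not_dvd (hp k hk') (hp0 k hk') fun hd => ?_).symm
    -- A prime `p k` with `k > j` dividing `I_i` would be smaller than `p j`.
    have hne : p k ≠ P := fun h => hn (h ▸ hd)
    have h1 := hi.2.2 (p k) (hp k hk') (hd.trans hHI) hne
    have h2 : Ideal.absNorm P ≤ Ideal.absNorm (p k) := hpmono j hj k hk' (by omega)
    omega
  have hNP : (0 : ℝ) < Ideal.absNorm P := by
    have : Ideal.absNorm P ≠ 0 := fun h => hp0 j hj (Ideal.absNorm_eq_zero_iff.mp h)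
    positivity
  have hfin : {H : Ideal (𝓞 K) | H ∣ M}.Finite := by
    have := UniqueFactorizationMonoid.fintypeSubtypeDvd M hM0
    exact Set.finite_coe_iff.mp (Finite.of_fintype {H : Ideal (𝓞 K) // H ∣ M})
  set t : ℕ → Ideal (𝓞 K) → Fin n → ℝ := fun r H i =>
    if Idl i = H * P ^ r ∧ x - Ideal.Quotient.mk Q (a i) ∈ H.map (Ideal.Quotient.mk Q)
      then 1 / (Ideal.absNorm P : ℝ) ^ r else 0 with ht
  have ht0 : ∀ r H i, 0 ≤ t r H i := by
    intro r H i
    simp only [ht]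
    split_ifs <;> positivity
  -- The sum over all ideals is a finite sum over the divisors of `M`.
  have hR : ∀ r, (∑' H : Ideal (𝓞 K), (if H ∣ M then ∑ i : Fin n, t r H i else 0)) =
      ∑ H ∈ hfin.toFinset, ∑ i : Fin n, t r H i := by
    intro r
    rw [tsum_eq_sum (s := hfin.toFinset)]
    · refine Finset.sum_congr rfl fun H hH => ?_
      rw [if_pos (by simpa using hH)]
    · intro H hH
      rw [if_neg (by simpa using hH)]
  have hR' : (∑ r ∈ Finset.Icc 1 (ν j), ∑ H ∈ hfin.toFinset, ∑ i : Fin n, t r H i) =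
      ∑ i : Fin n, ∑ r ∈ Finset.Icc 1 (ν j), ∑ H ∈ hfin.toFinset, t r H i := by
    rw [Finset.sum_comm (s := Finset.univ)]
    exact Finset.sum_congr rfl fun r _ => Finset.sum_comm
  have hgoal : (∑ r ∈ Finset.Icc 1 (ν j), ∑' H : Ideal (𝓞 K),
      (if H ∣ M then ∑ i : Fin n, t r H i else 0)) =
      ∑ i : Fin n, ∑ r ∈ Finset.Icc 1 (ν j), ∑ H ∈ hfin.toFinset, t r H i := by
    rw [← hR']
    exact Finset.sum_congr rfl fun r _ => hR r
  refine le_of_le_of_eq ?_ hgoal.symm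
  rw [hα j hj x]
  set C : Fin n → Finset (𝓞 K ⧸ Q) := fun i => Finset.univ.filter fun y : 𝓞 K ⧸ Q =>
    y - x ∈ M.map (Ideal.Quotient.mk Q) ∧
      y - Ideal.Quotient.mk Q (a i) ∈ (Idl i).map (Ideal.Quotient.mk Q) with hC
  set S : Finset (Fin n) := Finset.univ.filter fun i => IsPmin (Idl i) P with hS
  have hsub : F (j - 1) x ∩ B j ⊆ S.biUnion C := by
    intro y hy
    rw [hF, hB j hj] at hy
    simp only [Finset.mem_inter, Finset.mem_filter, Finset.mem_univ, true_and] at hy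
    obtain ⟨h1, i, hi, h2⟩ := hy
    simp only [Finset.mem_biUnion, hS, hC, Finset.mem_filter, Finset.mem_univ, true_and]
    exact ⟨i, hi, h1, h2⟩
  have hFpos : (0 : ℝ) < (F (j - 1) x).card := by
    have : x ∈ F (j - 1) x := by rw [hF]; simp
    exact_mod_cast Finset.card_pos.mpr ⟨x, this⟩
  have hcard : ((F (j - 1) x ∩ B j).card : ℝ) ≤ ∑ i ∈ S, ((C i).card : ℝ) := by
    exact_mod_cast (Finset.card_le_card hsub).trans Finset.card_biUnion_le
  have hterm : ∀ i ∈ S, ((C i).card : ℝ) / (F (j - 1) x).card ≤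
      ∑ r ∈ Finset.Icc 1 (ν j), ∑ H ∈ hfin.toFinset, t r H i := by
    intro i hi
    obtain ⟨r, hr, H, hHM, hI⟩ := hfac i (by simpa [hS] using hi)
    have hle : t r H i ≤ ∑ r ∈ Finset.Icc 1 (ν j), ∑ H ∈ hfin.toFinset, t r H i := by
      refine le_trans ?_ (Finset.single_le_sum
        (f := fun r => ∑ H ∈ hfin.toFinset, t r H i)
        (fun r _ => Finset.sum_nonneg fun H _ => ht0 r H i) hr)
      exact Finset.single_le_sum (f := fun H => t r H i) (fun H _ => ht0 r H i) (by simpa using hHM)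
    refine le_trans ?_ hle
    have hMH : M ≤ H := Ideal.dvd_iff_le.mp hHM
    have hIH : Idl i ≤ H := hI ▸ Ideal.mul_le_left
    by_cases hx : x - Ideal.Quotient.mk Q (a i) ∈ H.map (Ideal.Quotient.mk Q)
    · have htv : t r H i = 1 / (Ideal.absNorm P : ℝ) ^ r := by
        simp only [ht]
        rw [if_pos ⟨hI, hx⟩]
      have hQL : Q ≤ M * P ^ r := by
        rw [← Ideal.dvd_iff_le, hQeq]
        exact (mul_dvd_mul_left M (pow_dvd_pow P (Finset.mem_Icc.mp hr).2)).trans (dvd_mul_right _ _)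
      have hc := card_fibre_inter_le Q M (Idl i) P r hM0 hQL (hQI i) (hI ▸ Ideal.mul_le_right)
        hMP.pow_right x (Ideal.Quotient.mk Q (a i))
      rw [← hF (j - 1) x] at hc
      have hc' : (Ideal.absNorm P : ℝ) ^ r * (C i).card ≤ (F (j - 1) x).card := by
        exact_mod_cast hc
      rw [htv, div_le_div_iff₀ hFpos (by positivity)]
      linarith
    · -- If `x` misses the class modulo `H`, its fibre misses the class modulo `I_i`.
      have hemp : C i = ∅ := by
        refine Finset.eq_empty_of_forall_notMem fun y hy => hx ?_
        simp only [hC, Finset.mem_filter, Finset.mem_univ, true_and] at hy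
        have := Ideal.sub_mem _ (Ideal.map_mono hIH hy.2) (Ideal.map_mono hMH hy.1)
        rwa [sub_sub_sub_cancel_left] at this
      rw [hemp]
      simpa using ht0 r H i
  calc ((F (j - 1) x ∩ B j).card : ℝ) / (F (j - 1) x).card
      ≤ (∑ i ∈ S, ((C i).card : ℝ)) / (F (j - 1) x).card := by gcongr
    _ = ∑ i ∈ S, ((C i).card : ℝ) / (F (j - 1) x).card := Finset.sum_div _ _ _
    _ ≤ ∑ i ∈ S, ∑ r ∈ Finset.Icc 1 (ν j), ∑ H ∈ hfin.toFinset, t r H i :=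
        Finset.sum_le_sum hterm
    _ ≤ ∑ i : Fin n, ∑ r ∈ Finset.Icc 1 (ν j), ∑ H ∈ hfin.toFinset, t r H i :=
        Finset.sum_le_sum_of_subset_of_nonneg (Finset.subset_univ _) fun i _ _ =>
          Finset.sum_nonneg fun r _ => Finset.sum_nonneg fun H _ => ht0 r H i
end

section
/- Assume the number-field distortion setup and fix 1 ≤ j ≤ J. If δ_i = 0 for all 1 ≤ i ≤ j−1, then M_j^{(1)} ≤ s · Σ_I 1/N(I), where the sum is over all distinguishable ideals I of O_K with N(I) ≥ N(I_1) and P_min(I) = p_j. -/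
/-!
With `δ_i = 0` for `i < j` the recursion leaves the measure unchanged, so `P_{j-1}` is uniform
(`α_i ≥ 0`, hence the second branch of the recursion always applies, with factor `1`). The
fibres of `π_{j-1}` are the cosets of an ideal, so averaging `α_j` over them gives the density
of `𝓑_j` in `O_K/Q` (`sum_density`). The class `a_i + I_i` has density `1 / N(I_i)`
(`card_class`), so a union bound gives `M_j^{(1)} ≤ ∑ 1 / N(I_i)` over the `i` with
`P_min(I_i) = p_j`. Each ideal occurs at most `s` times among the `I_i`, and each such `I_i`
has norm at least `N(I_1)`, which gives the claim as a bound by a finite partial sum.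

Comparing the partial sum with the infinite sum requires the latter to converge
(`summable_Pmin`): an ideal `I` with `P_min(I) = p_j` is composed of the finitely many primes of
norm at most `N(p_j)`, and the sum over such ideals is dominated by a finite Euler product
(`summable_smooth`).
-/

set_option maxHeartbeats 1000000
set_option synthInstance.maxHeartbeats 1000000

open scoped Classical
open NumberField

/-! ### Counting cosets of an ideal in a finite ring -/

lemma card_coset {R : Type*} [CommRing R] [Fintype R] (H : Ideal R) (c : R) :
    (Finset.univ.filter fun x : R => x - c ∈ H).card = Nat.card H := by
  rw [← Fintype.card_subtype, ← Nat.card_eq_fintype_card]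
  exact Nat.card_congr ((Equiv.subRight c).subtypeEquiv fun x => Iff.rfl)

lemma card_coset' {R : Type*} [CommRing R] [Fintype R] (H : Ideal R) (c : R) :
    (Finset.univ.filter fun x : R => c - x ∈ H).card = Nat.card H := by
  rw [← card_coset H c]
  congr 1
  ext x
  simp only [Finset.mem_filter, Finset.mem_univ, true_and]
  rw [← neg_mem_iff, neg_sub]

/-- Averaging the relative density of `B` in the coset `x + H` over all `x` gives the
density of `B`; here without the normalisation by the size of the ring. -/
lemma sum_density {R : Type*} [CommRing R] [Fintype R] (H : Ideal R) (B : Finset R) :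
    ∑ x : R, (((Finset.univ.filter fun x' : R => x' - x ∈ H) ∩ B).card : ℝ) /
      ((Finset.univ.filter fun x' : R => x' - x ∈ H).card : ℝ) = B.card := by
  have hpos : (Nat.card H : ℝ) ≠ 0 := by exact_mod_cast Nat.card_pos.ne'
  simp only [card_coset]
  rw [← Finset.sum_div, div_eq_iff hpos]
  have h : ∀ x : R, (((Finset.univ.filter fun x' : R => x' - x ∈ H) ∩ B).card : ℝ) =
      ∑ b ∈ B, if b - x ∈ H then 1 else 0 := by
    intro x
    rw [Finset.sum_boole, Finset.inter_comm, Finset.inter_filter, Finset.inter_univ]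
  simp only [h]
  rw [Finset.sum_comm]
  simp only [Finset.sum_boole, card_coset', Finset.sum_const, nsmul_eq_mul]

/-- The residue class `c + I`, read modulo `Q ≤ I`, has density `1 / N(I)`. -/
lemma card_class_s11 {K : Type*} [Field K] [NumberField K] (Q I : Ideal (𝓞 K)) (hQI : Q ≤ I)
    (hI : I ≠ ⊥) [Fintype (𝓞 K ⧸ Q)] (c : 𝓞 K ⧸ Q) :
    ((Finset.univ.filter fun x : 𝓞 K ⧸ Q =>
      x - c ∈ I.map (Ideal.Quotient.mk Q)).card : ℝ) =
      (Fintype.card (𝓞 K ⧸ Q) : ℝ) * (1 / (Ideal.absNorm I : ℝ)) := by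
  have hN : (Ideal.absNorm I : ℝ) ≠ 0 := by
    exact_mod_cast fun h => hI (Ideal.absNorm_eq_zero_iff.mp h)
  rw [card_coset, mul_one_div, eq_div_iff hN]
  have h1 := Submodule.card_eq_card_quotient_mul_card (I.map (Ideal.Quotient.mk Q))
  have h2 : Nat.card ((𝓞 K ⧸ Q) ⧸ I.map (Ideal.Quotient.mk Q)) = Ideal.absNorm I := by
    rw [Nat.card_congr (DoubleQuot.quotQuotEquivQuotOfLE hQI).toEquiv]
    rfl
  rw [← Nat.card_eq_fintype_card, h1, h2]
  push_cast
  ring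

/-! ### Convergence of the sum over ideals -/

/-- An ideal with all prime factors in `S` is the product of the members of `S` to the
powers given by its factorization. -/
lemma eq_prod_pow {K : Type*} [Field K] [NumberField K] (S : Finset (Ideal (𝓞 K)))
    (I : Ideal (𝓞 K)) (hI : I ≠ ⊥) (hS : ∀ q : Ideal (𝓞 K), q.IsPrime → q ∣ I → q ∈ S) :
    I = ∏ q ∈ S, q ^ (UniqueFactorizationMonoid.normalizedFactors I).count q := by
  rw [← Finset.prod_multiset_count_of_subset]
  · exact (Ideal.prod_normalizedFactors_eq_self hI).symm
  · intro q hq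
    rw [Multiset.mem_toFinset] at hq
    exact hS q (Ideal.isPrime_of_prime (UniqueFactorizationMonoid.prime_of_normalized_factor q hq))
      (UniqueFactorizationMonoid.dvd_of_mem_normalizedFactors hq)

/-- The ideals composed of finitely many primes have a convergent sum of
inverse norms, dominated by the Euler product `∏ (1 - 1 / N(q))⁻¹`. -/
lemma summable_smooth {K : Type*} [Field K] [NumberField K] (S : Finset (Ideal (𝓞 K)))
    (hS2 : ∀ q ∈ S, 1 < Ideal.absNorm q) (f : Ideal (𝓞 K) → Prop) [DecidablePred f]
    (hf : ∀ I, f I → I ≠ ⊥ ∧ ∀ q : Ideal (𝓞 K), q.IsPrime → q ∣ I → q ∈ S) :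
    Summable fun I : Ideal (𝓞 K) => if f I then 1 / (Ideal.absNorm I : ℝ) else 0 := by
  refine summable_of_sum_le (c := ∏ q ∈ S, (1 - (Ideal.absNorm q : ℝ)⁻¹)⁻¹) ?_ ?_
  · intro I
    dsimp only
    split_ifs <;> positivity
  intro T
  rw [← Finset.sum_filter]
  set e : Ideal (𝓞 K) → Ideal (𝓞 K) → ℕ :=
    fun I q => (UniqueFactorizationMonoid.normalizedFactors I).count q with he
  -- all exponents occurring in the finite set `T` are below `E`
  set E : ℕ := (T.sup fun I => S.sup fun q => e I q) + 1 with hE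
  have hlt : ∀ I ∈ T, ∀ q ∈ S, e I q < E := by
    intro I hI q hq
    have h1 : e I q ≤ S.sup fun q => e I q := Finset.le_sup (f := fun q => e I q) hq
    have h2 : (S.sup fun q => e I q) ≤ T.sup fun I => S.sup fun q => e I q :=
      Finset.le_sup (f := fun I => S.sup fun q => e I q) hI
    omega
  have hprod : ∀ I, f I → I = ∏ q ∈ S, q ^ e I q := fun I h =>
    eq_prod_pow S I (hf I h).1 (hf I h).2
  calc ∑ I ∈ T.filter f, 1 / (Ideal.absNorm I : ℝ)
      ≤ ∑ g ∈ S.pi (fun _ => Finset.range E),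
          ∏ q ∈ S.attach, ((Ideal.absNorm q.1 : ℝ)⁻¹) ^ g q.1 q.2 := by
        have hinj : Set.InjOn (fun I q (_ : q ∈ S) => e I q) (T.filter f : Set (Ideal (𝓞 K))) := by
          intro I hI I' hI' h
          rw [hprod I (Finset.mem_filter.mp hI).2, hprod I' (Finset.mem_filter.mp hI').2]
          exact Finset.prod_congr rfl fun q hq => congrArg (q ^ ·) (congrFun (congrFun h q) hq)
        have hval : ∀ I ∈ T.filter f, 1 / (Ideal.absNorm I : ℝ) =
            ∏ q ∈ S.attach, ((Ideal.absNorm q.1 : ℝ)⁻¹) ^ e I q.1 := by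
          intro I hI
          rw [Finset.prod_attach S fun q => ((Ideal.absNorm q : ℝ)⁻¹) ^ e I q, one_div]
          conv_lhs => rw [hprod I (Finset.mem_filter.mp hI).2]
          simp only [map_prod, map_pow, Nat.cast_prod, Nat.cast_pow, inv_pow, Finset.prod_inv_distrib]
        rw [Finset.sum_congr rfl hval, ← Finset.sum_image
          (f := fun g : (q : Ideal (𝓞 K)) → q ∈ S → ℕ =>
            ∏ q ∈ S.attach, ((Ideal.absNorm q.1 : ℝ)⁻¹) ^ g q.1 q.2) hinj]
        refine Finset.sum_le_sum_of_subset_of_nonneg ?_ fun _ _ _ => by positivity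
        intro g hg
        obtain ⟨I, hI, rfl⟩ := Finset.mem_image.mp hg
        exact Finset.mem_pi.mpr fun q hq =>
          Finset.mem_range.mpr (hlt I (Finset.mem_filter.mp hI).1 q hq)
    _ = ∏ q ∈ S, ∑ k ∈ Finset.range E, ((Ideal.absNorm q : ℝ)⁻¹) ^ k := by
        rw [Finset.prod_sum]
    _ ≤ ∏ q ∈ S, (1 - (Ideal.absNorm q : ℝ)⁻¹)⁻¹ := by
        refine Finset.prod_le_prod (fun q _ => by positivity) fun q hq => ?_
        have h1 : (Ideal.absNorm q : ℝ)⁻¹ < 1 :=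
          inv_lt_one_of_one_lt₀ (by exact_mod_cast hS2 q hq)
        have h0 : 0 ≤ (Ideal.absNorm q : ℝ)⁻¹ := by positivity
        rw [← tsum_geometric_of_lt_one h0 h1]
        exact (summable_geometric_of_lt_one h0 h1).sum_le_tsum _ fun _ _ => by positivity

/-- The sum of `1 / N(I)` over ideals `I` with a prescribed prime factor of largest norm
converges, since only the finitely many primes of norm at most `N(p)` can occur in `I`. -/
lemma summable_Pmin {K : Type*} [Field K] [NumberField K] (p : Ideal (𝓞 K)) (N : ℕ) :
    Summable fun I : Ideal (𝓞 K) =>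
      if Distinguishable I ∧ N ≤ Ideal.absNorm I ∧ IsPmin I p
      then 1 / (Ideal.absNorm I : ℝ) else 0 := by
  have hfin : {q : Ideal (𝓞 K) | Ideal.absNorm q ≤ Ideal.absNorm p}.Finite :=
    Ideal.finite_setOfPred_absNorm_le _
  refine summable_smooth (hfin.toFinset.filter fun q => 1 < Ideal.absNorm q) ?_ _ ?_
  · intro q hq
    exact (Finset.mem_filter.mp hq).2
  · rintro I ⟨hd, -, hpm⟩
    refine ⟨hd.1, fun q hq hqI => ?_⟩
    have hle : Ideal.absNorm q ≤ Ideal.absNorm p := by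
      by_cases h : q = p
      · rw [h]
      · exact (hpm.2.2 q hq hqI h).le
    simp only [Finset.mem_filter, Set.Finite.mem_toFinset, Set.mem_ofPred_eq]
    refine ⟨hle, ?_⟩
    have h0 : Ideal.absNorm q ≠ 0 := fun h => hd.1 <| by
      rw [Ideal.absNorm_eq_zero_iff] at h
      rw [h] at hqI
      exact zero_dvd_iff.mp hqI
    have h1 : Ideal.absNorm q ≠ 1 := fun h => hq.ne_top (Ideal.absNorm_eq_one_iff.mp h)
    omega

/-- First moment bound. -/
theorem first_moment_bound
    {K : Type*} [Field K] [NumberField K]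
    (n : ℕ) (hn : 0 < n)
    (a : Fin n → 𝓞 K) (Idl : Fin n → Ideal (𝓞 K))
    (hdist : ∀ i : Fin n, Distinguishable (Idl i))
    (hmono : ∀ i j : Fin n, i ≤ j → Ideal.absNorm (Idl i) ≤ Ideal.absNorm (Idl j))
    (s : ℕ)
    (hsle : ∀ I₀ : Ideal (𝓞 K), (Finset.univ.filter fun i : Fin n => Idl i = I₀).card ≤ s)
    (hseq : ∃ I₀ : Ideal (𝓞 K), (Finset.univ.filter fun i : Fin n => Idl i = I₀).card = s)
    (Q : Ideal (𝓞 K)) (hQ : Q = ⨅ i : Fin n, Idl i)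
    (J : ℕ) (p : ℕ → Ideal (𝓞 K)) (ν : ℕ → ℕ)
    (hp : ∀ j ∈ Finset.Icc 1 J, (p j).IsPrime)
    (hν : ∀ j ∈ Finset.Icc 1 J, 1 ≤ ν j)
    (hpinj : ∀ j ∈ Finset.Icc 1 J, ∀ j' ∈ Finset.Icc 1 J, p j = p j' → j = j')
    (hfact : Q = ∏ j ∈ Finset.Icc 1 J, p j ^ ν j)
    (hpmono : ∀ j ∈ Finset.Icc 1 J, ∀ j' ∈ Finset.Icc 1 J, j ≤ j' →
      Ideal.absNorm (p j) ≤ Ideal.absNorm (p j'))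
    (Qp : ℕ → Ideal (𝓞 K)) (hQp : ∀ j : ℕ, Qp j = ∏ i ∈ Finset.Icc 1 j, p i ^ ν i)
    [Fintype (𝓞 K ⧸ Q)]
    (B : ℕ → Finset (𝓞 K ⧸ Q))
    (hB : ∀ j ∈ Finset.Icc 1 J, B j = Finset.univ.filter fun x : 𝓞 K ⧸ Q =>
      ∃ i : Fin n, IsPmin (Idl i) (p j) ∧
        x - Ideal.Quotient.mk Q (a i) ∈ (Idl i).map (Ideal.Quotient.mk Q))
    (F : ℕ → (𝓞 K ⧸ Q) → Finset (𝓞 K ⧸ Q))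
    (hF : ∀ (j : ℕ) (x : 𝓞 K ⧸ Q),
      F j x = Finset.univ.filter fun x' : 𝓞 K ⧸ Q => x' - x ∈ (Qp j).map (Ideal.Quotient.mk Q))
    (α : ℕ → (𝓞 K ⧸ Q) → ℝ)
    (hα : ∀ j ∈ Finset.Icc 1 J, ∀ x : 𝓞 K ⧸ Q,
      α j x = ((F (j - 1) x ∩ B j).card : ℝ) / ((F (j - 1) x).card : ℝ))
    (δ : ℕ → ℝ) (hδ : ∀ j ∈ Finset.Icc 1 J, δ j ∈ Set.Icc (0 : ℝ) (1 / 2))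
    (P : ℕ → (𝓞 K ⧸ Q) → ℝ)
    (hP0 : ∀ x : 𝓞 K ⧸ Q, P 0 x = 1 / (Fintype.card (𝓞 K ⧸ Q) : ℝ))
    (hPrec : ∀ j ∈ Finset.Icc 1 J, ∀ x : 𝓞 K ⧸ Q,
      P j x = if α j x < δ j then (if x ∈ B j then 0 else P (j - 1) x / (1 - α j x))
        else if α j x = 0 then P (j - 1) x
        else P (j - 1) x * (α j x - (if x ∈ B j then δ j else 0)) / (α j x * (1 - δ j)))
    (j : ℕ) (hj : j ∈ Finset.Icc 1 J)
    (hδ0 : ∀ i ∈ Finset.Icc 1 (j - 1), δ i = 0) :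
    ∑ x : 𝓞 K ⧸ Q, α j x * P (j - 1) x ≤
      (s : ℝ) * ∑' I : Ideal (𝓞 K),
        (if Distinguishable I ∧ Ideal.absNorm (Idl ⟨0, hn⟩) ≤ Ideal.absNorm I ∧
            IsPmin I (p j)
         then 1 / (Ideal.absNorm I : ℝ) else 0) := by
  have hjJ := Finset.mem_Icc.mp hj
  have hQI : ∀ i, Q ≤ Idl i := fun i => hQ ▸ iInf_le _ i
  have hcard : (0 : ℝ) < Fintype.card (𝓞 K ⧸ Q) := by exact_mod_cast Fintype.card_pos
  -- with vanishing `δ`, no distortion takes place before step `j`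
  have hP : ∀ k, k ≤ j - 1 → ∀ x, P k x = 1 / (Fintype.card (𝓞 K ⧸ Q) : ℝ) := by
    intro k
    induction k with
    | zero => exact fun _ => hP0
    | succ k ih =>
      intro hk x
      have hkJ : k + 1 ∈ Finset.Icc 1 J := Finset.mem_Icc.mpr ⟨by omega, by omega⟩
      have hα0 : 0 ≤ α (k + 1) x := by rw [hα _ hkJ]; positivity
      rw [hPrec _ hkJ, hδ0 _ (Finset.mem_Icc.mpr ⟨by omega, hk⟩), if_neg hα0.not_gt,
        Nat.add_sub_cancel, ih (by omega)]
      split_ifs with h1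
      · rfl
      all_goals rw [sub_zero, sub_zero, mul_one, mul_div_cancel_right₀ _ h1]
  have hM : ∑ x : 𝓞 K ⧸ Q, α j x * P (j - 1) x =
      ((B j).card : ℝ) / Fintype.card (𝓞 K ⧸ Q) := by
    simp only [hP (j - 1) le_rfl]
    rw [← Finset.sum_mul, mul_one_div]
    congr 1
    rw [← sum_density ((Qp (j - 1)).map (Ideal.Quotient.mk Q)) (B j)]
    refine Finset.sum_congr rfl fun x _ => ?_
    rw [hα j hj, hF]
  set A : Finset (Fin n) := Finset.univ.filter fun i => IsPmin (Idl i) (p j) with hA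
  have hBle : ((B j).card : ℝ) / Fintype.card (𝓞 K ⧸ Q) ≤
      ∑ i ∈ A, 1 / (Ideal.absNorm (Idl i) : ℝ) := by
    rw [div_le_iff₀ hcard, mul_comm, Finset.mul_sum]
    have hsub : B j ⊆ A.biUnion fun i => Finset.univ.filter fun x : 𝓞 K ⧸ Q =>
        x - Ideal.Quotient.mk Q (a i) ∈ (Idl i).map (Ideal.Quotient.mk Q) := by
      intro x hx
      rw [hB j hj, Finset.mem_filter] at hx
      obtain ⟨-, i, hi, hxi⟩ := hx
      exact Finset.mem_biUnion.mpr ⟨i, by simp [hA, hi], by simp [hxi]⟩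
    calc ((B j).card : ℝ) ≤ ∑ i ∈ A, ((Finset.univ.filter fun x : 𝓞 K ⧸ Q =>
        x - Ideal.Quotient.mk Q (a i) ∈ (Idl i).map (Ideal.Quotient.mk Q)).card : ℝ) := by
          exact_mod_cast (Finset.card_le_card hsub).trans Finset.card_biUnion_le
      _ = _ := Finset.sum_congr rfl fun i _ => card_class_s11 Q (Idl i) (hQI i) (hdist i).1 _
  rw [hM]
  refine hBle.trans ?_
  set g : Ideal (𝓞 K) → ℝ := fun I =>
    if Distinguishable I ∧ Ideal.absNorm (Idl ⟨0, hn⟩) ≤ Ideal.absNorm I ∧ IsPmin I (p j)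
    then 1 / (Ideal.absNorm I : ℝ) else 0 with hg
  have hg0 : ∀ I, 0 ≤ g I := by
    intro I
    simp only [hg]
    split_ifs <;> positivity
  have hgA : ∀ i ∈ A, 1 / (Ideal.absNorm (Idl i) : ℝ) = g (Idl i) := by
    intro i hi
    exact (if_pos ⟨hdist i, hmono _ _ (Fin.mk_le_of_le_val (Nat.zero_le _)),
      (Finset.mem_filter.mp hi).2⟩).symm
  calc ∑ i ∈ A, 1 / (Ideal.absNorm (Idl i) : ℝ) = ∑ i ∈ A, g (Idl i) :=
        Finset.sum_congr rfl hgA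
    _ = ∑ I ∈ A.image Idl, (A.filter fun i => Idl i = I).card • g I := Finset.sum_comp g Idl
    _ ≤ ∑ I ∈ A.image Idl, (s : ℝ) * g I := by
        refine Finset.sum_le_sum fun I _ => ?_
        rw [nsmul_eq_mul]
        refine mul_le_mul_of_nonneg_right ?_ (hg0 I)
        exact_mod_cast (Finset.card_le_card
          (Finset.filter_subset_filter _ (Finset.subset_univ A))).trans (hsle I)
    _ = (s : ℝ) * ∑ I ∈ A.image Idl, g I := by rw [Finset.mul_sum]
    _ ≤ (s : ℝ) * ∑' I, g I :=
        mul_le_mul_of_nonneg_left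
          ((summable_Pmin (p j) _).sum_le_tsum _ fun I _ => hg0 I) (Nat.cast_nonneg s)
end
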